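/- Let dA, dB, dC be positive integers and U : Matrix ((Fin dB) × (Fin dC)) (Fin dA) ℂ with Uᴴ * U = 1. Let ρ and ρ' be density matrices on Fin dA, with entropies SA = S(ρ), SB = S(tr_C (U ρ Uᴴ)), SC = S(tr_B (U ρ Uᴴ)) and SA' = S(ρ'), SB' = S(tr_C (U ρ' Uᴴ)). If SB < SC and SB' < SA', then the rate (SC − SB + (SB/(SA' − SB'))·SA') / (1 + SB/(SA' − SB')) is achievable with one-way LOCC (C→B) decoding for U. -/

import Mathlib

/-!
A vector of `B ⊗ C` is treated as a matrix `Y` with a `B` index and a `C` index, so that its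
marginals are `Y * Yᴴ` and (up to a transpose) `Yᴴ * Y`. Random code words are superpositions
`∑ a, ph (g a) • V a` of the weighted outputs `V a = √(q a) • K a` of the eigenvectors of a source,
with independent phases `ph (g a)` in `{1, i, -1, -i}`; they are unit vectors in the range of the
isometry. Two moments are needed: the average of the code word states is the ensemble average
(`phsum_second`), and the expected purity of the marginal of a code word is at most the sum of the
purities of the two marginals of the ensemble average (`phsum_fourth`).

The `n = n1 + n2` copies are split into two blocks. The first one uses i.i.d. inputs from `ρ`.
Cut to typical subspaces, its code words have Schmidt rank at most about `2 ^ (n1 * SB)`, whereas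
the eigenvalues of the average on `C` are about `2 ^ (-n1 * SC)`. So Charlie alone can tell apart
about `2 ^ (n1 * (SC - SB))` code words, chosen one after the other such that the support of each
on `C` is nearly orthogonal to the preceding ones (`stage1`). His projective measurement hardly
disturbs the code word, which stays entangled: its purity on `B` is about `2 ^ (-n1 * SB)`.

The second block uses i.i.d. inputs from `ρ'`, conditioned on the typical set. Charlie measures
what he holds of both blocks in vectors of random phases (`Eph`), which leaves Bob with a pure
state for each outcome. By the two moments, Bob can tell apart `mm` messages, chosen greedily, as
long as `mm` times the sum of the purities of the ensemble average on `B` and on `B ⊗ C` is small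
(`stage2`). The left-over entanglement multiplies the purity on `B`, and the sum is about
`2 ^ (-n1 * SB - n2 * SB') + 2 ^ (-n2 * SA')` (`stage3_one`). Hence about `2 ^ (n2 * SA')` messages
get through once `n2 * (SA' - SB') ≤ n1 * SB`. Together this is `stage3`; `locc_assemble` completes
the measurements to a one-way POVM.

Chebyshev's inequality provides the typical sets and subspaces (`typical_set`,
`typical_subspace`), which gives `finite_code`. Choosing `n2 / n1` close to `SB / (SA' - SB')`
(`block_lengths`) makes `(n1 * (SC - SB) + n2 * SA') / n` tend to the claimed rate.
-/

open scoped BigOperators Classical ComplexOrder Matrix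

noncomputable section

/-- von Neumann entropy in bits of a (Hermitian) matrix, via its eigenvalues. -/
def vnEntropy {n : Type*} [Fintype n] [DecidableEq n] (ρ : Matrix n n ℂ) : ℝ :=
  if h : ρ.IsHermitian then -∑ i, h.eigenvalues i * Real.logb 2 (h.eigenvalues i) else 0

/-- A density matrix: positive semidefinite with unit trace. -/
def IsDensityMatrix {n : Type*} [Fintype n] [DecidableEq n] (ρ : Matrix n n ℂ) : Prop :=
  ρ.PosSemidef ∧ ρ.trace = 1

/-- Partial trace over the second (C) factor. -/
def ptraceC {dB dC : ℕ} (M : Matrix (Fin dB × Fin dC) (Fin dB × Fin dC) ℂ) :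
    Matrix (Fin dB) (Fin dB) ℂ := fun i k => ∑ j, M (i, j) (k, j)

/-- Partial trace over the first (B) factor. -/
def ptraceB {dB dC : ℕ} (M : Matrix (Fin dB × Fin dC) (Fin dB × Fin dC) ℂ) :
    Matrix (Fin dC) (Fin dC) ℂ := fun j l => ∑ i, M (i, j) (i, l)

/-- Partial transpose (on the second factor). -/
def ptranspose {dB dC : ℕ} (M : Matrix (Fin dB × Fin dC) (Fin dB × Fin dC) ℂ) :
    Matrix (Fin dB × Fin dC) (Fin dB × Fin dC) ℂ := fun p q => M (p.1, q.2) (q.1, p.2)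

/-- The pure state (rank-one projector) associated to a vector. -/
def pureState {ι : Type*} (v : ι → ℂ) : Matrix ι ι ℂ := Matrix.vecMulVec v (star v)

/-- A unit vector. -/
def IsUnitVec {ι : Type*} [Fintype ι] (v : ι → ℂ) : Prop := ∑ x, Complex.normSq (v x) = 1

/-- Entanglement entropy of a bipartite pure state. -/
def entg {dB dC : ℕ} (v : Fin dB × Fin dC → ℂ) : ℝ := vnEntropy (ptraceC (pureState v))

/-- The n-fold tensor power of an isometry `U : A → B ⊗ C`. -/
def tensorPow {dA dB dC : ℕ} (U : Matrix (Fin dB × Fin dC) (Fin dA) ℂ) (n : ℕ) :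
    Matrix (Fin n → Fin dB × Fin dC) (Fin n → Fin dA) ℂ :=
  fun f g => ∏ k, U (f k) (g k)

/-- n-fold partial trace over the C factors. -/
def ptraceCn {dB dC n : ℕ}
    (M : Matrix (Fin n → Fin dB × Fin dC) (Fin n → Fin dB × Fin dC) ℂ) :
    Matrix (Fin n → Fin dB) (Fin n → Fin dB) ℂ :=
  fun fB gB => ∑ fC : Fin n → Fin dC, M (fun k => (fB k, fC k)) (fun k => (gB k, fC k))

/-- n-fold partial transpose over the C factors. -/
def ptransposeN {dB dC n : ℕ}
    (M : Matrix (Fin n → Fin dB × Fin dC) (Fin n → Fin dB × Fin dC) ℂ) :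
    Matrix (Fin n → Fin dB × Fin dC) (Fin n → Fin dB × Fin dC) ℂ :=
  fun f g => M (fun k => ((f k).1, (g k).2)) (fun k => ((g k).1, (f k).2))

/-- A POVM on the n-fold space implemented by one-way LOCC from C to B:
Charlie measures `(M x)` on `C^n`, sends `x`, and Bob measures `(B x i)` on `B^n`. -/
def IsOneWayLOCC {dB dC n N : ℕ}
    (Np : Fin N → Matrix (Fin n → Fin dB × Fin dC) (Fin n → Fin dB × Fin dC) ℂ) : Prop :=
  ∃ (m : ℕ) (M : Fin m → Matrix (Fin n → Fin dC) (Fin n → Fin dC) ℂ)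
    (B : Fin m → Fin N → Matrix (Fin n → Fin dB) (Fin n → Fin dB) ℂ),
    (∀ x, (M x).PosSemidef) ∧ (∑ x, M x) = 1 ∧
    (∀ x i, (B x i).PosSemidef) ∧ (∀ x, (∑ i, B x i) = 1) ∧
    (∀ i f g, Np i f g =
      ∑ x, B x i (fun k => (f k).1) (fun k => (g k).1) * M x (fun k => (f k).2) (fun k => (g k).2))

/-- The rate R is achievable with one-way LOCC (C→B) decoding for the isometry U. -/
def AchievableOneWayCB {dA dB dC : ℕ} (U : Matrix (Fin dB × Fin dC) (Fin dA) ℂ) (R : ℝ) : Prop :=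
  ∀ ε : ℝ, 0 < ε → ∃ n₀ : ℕ, ∀ n : ℕ, n₀ ≤ n →
    ∃ (N : ℕ) (φ : Fin N → (Fin n → Fin dB × Fin dC) → ℂ)
      (Np : Fin N → Matrix (Fin n → Fin dB × Fin dC) (Fin n → Fin dB × Fin dC) ℂ),
      (2 : ℝ) ^ ((n : ℝ) * (R - ε)) ≤ (N : ℝ) ∧
      (∀ i, IsUnitVec (φ i)) ∧
      (∀ i, ∃ ψ, (tensorPow U n).mulVec ψ = φ i) ∧
      IsOneWayLOCC Np ∧
      (∀ i, 1 - ε ≤ (Matrix.trace (pureState (φ i) * Np i)).re)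

/-- Base-2 Shannon entropy. -/
def shannonEntropy {ι : Type*} [Fintype ι] (q : ι → ℝ) : ℝ := -∑ x, q x * Real.logb 2 (q x)

/-! ### Random phases: second and fourth moments -/

/-- The real part of the trace. -/
def rt {n : Type*} [Fintype n] (M : Matrix n n ℂ) : ℝ := M.trace.re

section basics
variable {m n : Type*} [Fintype m] [Fintype n]

lemma rt_add (A B : Matrix n n ℂ) : rt (A + B) = rt A + rt B := by simp [rt]
lemma rt_sub (A B : Matrix n n ℂ) : rt (A - B) = rt A - rt B := by simp [rt]
lemma rt_smul (c : ℝ) (A : Matrix n n ℂ) : rt ((c : ℂ) • A) = c * rt A := by simp [rt]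
lemma rt_sum {ι : Type*} (s : Finset ι) (A : ι → Matrix n n ℂ) :
    rt (∑ i ∈ s, A i) = ∑ i ∈ s, rt (A i) := by simp [rt, Matrix.trace_sum]
lemma rt_comm (A : Matrix m n ℂ) (B : Matrix n m ℂ) : rt (A * B) = rt (B * A) := by
  simp [rt, Matrix.trace_mul_comm A B]

lemma rt_nonneg {A : Matrix n n ℂ} (hA : A.PosSemidef) : 0 ≤ rt A := by
  have := hA.trace_nonneg
  exact (Complex.le_def.1 this).1

open scoped MatrixOrder in
lemma rt_mul_nonneg {A B : Matrix n n ℂ} (hA : A.PosSemidef) (hB : B.PosSemidef) :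
    0 ≤ rt (A * B) := by
  obtain ⟨S, rfl⟩ := CStarAlgebra.nonneg_iff_eq_star_mul_self.mp hA.nonneg
  rw [mul_assoc, rt_comm]
  exact rt_nonneg (hB.mul_mul_conjTranspose_same S)

/-- The purity is monotone in the Loewner order. -/
lemma rt_sq_mono {A B : Matrix n n ℂ} (hA : A.PosSemidef) (hAB : (B - A).PosSemidef) :
    rt (A * A) ≤ rt (B * B) := by
  have h1 := rt_mul_nonneg hAB hA
  have h2 := rt_mul_nonneg hAB (hAB.add hA)
  simp only [sub_add_cancel, Matrix.sub_mul, rt_sub] at h1 h2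
  have := rt_comm A B
  linarith

/-- A positive operator bounded by `l` has purity at most `l` times its trace. -/
lemma rt_sq_le [DecidableEq n] {A : Matrix n n ℂ} {l : ℝ} (hA : A.PosSemidef)
    (hl : ((l : ℂ) • (1 : Matrix n n ℂ) - A).PosSemidef) : rt (A * A) ≤ l * rt A := by
  have h1 := rt_mul_nonneg hl hA
  simp only [Matrix.sub_mul, rt_sub, Matrix.smul_mul, Matrix.one_mul, rt_smul] at h1
  linarith

end basics

/-- The four phases `1, i, -1, -i`. -/
def ph : Fin 4 → ℂ := ![1, Complex.I, -1, -Complex.I]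

lemma ph_mul_star (u : Fin 4) : ph u * star (ph u) = 1 := by
  fin_cases u <;> simp [ph]

/-- The superposition `∑ a, ph (g a) • V a`. -/
def phsum {ι m k : Type*} [Fintype ι] (V : ι → Matrix m k ℂ) (g : ι → Fin 4) : Matrix m k ℂ :=
  ∑ a, ph (g a) • V a

section phases
variable {ι m k : Type*} [Fintype ι] [DecidableEq ι]

/-- Resampling one phase leaves the uniform average unchanged. -/
lemma sum_update {E : Type*} [AddCommMonoid E] (f : (ι → Fin 4) → E) (a : ι) :
    ∑ g, ∑ u, f (Function.update g a u) = 4 • ∑ g, f g := by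
  rw [← Fintype.sum_prod_type' (f := fun g u => f (Function.update g a u))]
  let e : (ι → Fin 4) × Fin 4 ≃ (ι → Fin 4) × Fin 4 :=
    Function.Involutive.toPerm (fun p => (Function.update p.1 a p.2, p.1 a)) (by
      intro p; simp)
  rw [Fintype.sum_equiv e (fun p => f (Function.update p.1 a p.2)) (fun p => f p.1)
    (fun p => rfl), Fintype.sum_prod_type]
  simp [Finset.sum_nsmul]

/-- The number of phase patterns. -/
def cd (ι : Type*) [Fintype ι] [DecidableEq ι] : ℝ := (Fintype.card (ι → Fin 4) : ℝ)

lemma cd_pos : 0 < cd ι := by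
  unfold cd; exact_mod_cast Fintype.card_pos

lemma ph_second (a b : ι) :
    ∑ g : ι → Fin 4, ph (g a) * star (ph (g b)) = if a = b then (cd ι : ℂ) else 0 := by
  split_ifs with h
  · subst h; simp only [ph_mul_star]; simp [cd]
  · have := sum_update (fun g : ι → Fin 4 => ph (g a) * star (ph (g b))) a
    simp only [Function.update_self, Function.update_of_ne (Ne.symm h), ← Finset.sum_mul] at this
    have h0 : ∑ u, ph u = 0 := by simp [Fin.sum_univ_four, ph]
    simp only [h0, zero_mul, Finset.sum_const_zero] at this
    simpa using this.symm

/-- The second moment: random superpositions reproduce the ensemble average. -/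
lemma phsum_second [Fintype k] (V : ι → Matrix m k ℂ) (M : Matrix k k ℂ) :
    ∑ g, phsum V g * M * (phsum V g)ᴴ = (cd ι : ℂ) • ∑ a, V a * M * (V a)ᴴ := by
  have : ∀ g : ι → Fin 4, phsum V g * M * (phsum V g)ᴴ =
      ∑ a, ∑ b, (ph (g a) * star (ph (g b))) • (V a * M * (V b)ᴴ) := by
    intro g
    simp only [phsum, Matrix.conjTranspose_sum, Matrix.conjTranspose_smul, Matrix.sum_mul,
      Matrix.mul_sum, Matrix.smul_mul, Matrix.mul_smul]
    rw [Finset.sum_comm]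
    refine Finset.sum_congr rfl fun a _ => ?_
    rw [Finset.smul_sum]
    refine Finset.sum_congr rfl fun b _ => ?_
    rw [smul_smul, mul_comm]
  simp_rw [this]
  rw [Finset.sum_comm, Finset.smul_sum]
  refine Finset.sum_congr rfl fun a _ => ?_
  rw [Finset.sum_comm]
  simp only [← Finset.sum_smul, ph_second]
  simp

lemma rt_phsum_second [Fintype k] [Fintype m] (V : ι → Matrix m k ℂ) (Q : Matrix m m ℂ)
    (M : Matrix k k ℂ) :
    ∑ g, rt (Q * (phsum V g * M * (phsum V g)ᴴ)) = cd ι * rt (Q * ∑ a, V a * M * (V a)ᴴ) := by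
  rw [← rt_sum, ← Matrix.mul_sum, phsum_second, Matrix.mul_smul, rt_smul]

variable [Fintype m] [Fintype k]

/-- Averaging the fourth-order trace over a single phase. -/
lemma avg_four (X V : Matrix m k ℂ) :
    ∑ u, rt ((X + ph u • V) * (X + ph u • V)ᴴ * ((X + ph u • V) * (X + ph u • V)ᴴ)) =
      4 * (rt (X * Xᴴ * (X * Xᴴ)) + 2 * rt (V * Vᴴ * (X * Xᴴ)) + 2 * rt (Vᴴ * V * (Xᴴ * X))
        + rt (V * Vᴴ * (V * Vᴴ))) := by
  have c1 : (X * Xᴴ * (V * Vᴴ)).trace = (V * Vᴴ * (X * Xᴴ)).trace := Matrix.trace_mul_comm _ _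
  have c2 : (X * Vᴴ * (V * Xᴴ)).trace = (Vᴴ * V * (Xᴴ * X)).trace := by
    rw [Matrix.mul_assoc, Matrix.trace_mul_comm]; simp only [Matrix.mul_assoc]
  have c3 : (V * Xᴴ * (X * Vᴴ)).trace = (Vᴴ * V * (Xᴴ * X)).trace := by
    rw [Matrix.trace_mul_comm, c2]
  simp only [rt, Fin.sum_univ_four, ph, Matrix.cons_val, Matrix.conjTranspose_add,
    Matrix.conjTranspose_smul, Matrix.mul_add, Matrix.add_mul, Matrix.smul_mul, Matrix.mul_smul,
    Matrix.trace_add, Matrix.trace_smul, smul_eq_mul, c1, c2, c3, Complex.add_re,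
    Complex.mul_re]
  simp
  ring

/-- Partial sums of random superpositions: the expected purity is at most the sum of the
purities of the two marginals. -/
lemma phsum_fourth_aux (V : ι → Matrix m k ℂ) (s : Finset ι) :
    ∑ g : ι → Fin 4, rt ((∑ a ∈ s, ph (g a) • V a) * (∑ a ∈ s, ph (g a) • V a)ᴴ *
      ((∑ a ∈ s, ph (g a) • V a) * (∑ a ∈ s, ph (g a) • V a)ᴴ)) ≤
    cd ι * (rt ((∑ a ∈ s, V a * (V a)ᴴ) * (∑ a ∈ s, V a * (V a)ᴴ)) +
      rt ((∑ a ∈ s, (V a)ᴴ * V a) * (∑ a ∈ s, (V a)ᴴ * V a))) := by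
  induction s using Finset.induction_on with
  | empty => simp [rt]
  | insert a s ha ih =>
    have key := sum_update (fun g : ι → Fin 4 =>
      rt ((∑ a ∈ insert a s, ph (g a) • V a) * (∑ a ∈ insert a s, ph (g a) • V a)ᴴ *
      ((∑ a ∈ insert a s, ph (g a) • V a) * (∑ a ∈ insert a s, ph (g a) • V a)ᴴ))) a
    have e1 : ∀ (g : ι → Fin 4) u, ∑ b ∈ insert a s, ph (Function.update g a u b) • V b =
        (∑ b ∈ s, ph (g b) • V b) + ph u • V a := by
      intro g u
      rw [Finset.sum_insert ha, add_comm, Function.update_self]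
      congr 1
      refine Finset.sum_congr rfl fun b hb => ?_
      rw [Function.update_of_ne (by rintro rfl; exact ha hb)]
    simp only [e1, avg_four] at key
    rw [← Finset.mul_sum, Finset.sum_add_distrib, Finset.sum_add_distrib, Finset.sum_add_distrib,
      ← Finset.mul_sum, ← Finset.mul_sum] at key
    -- restrict the family to `s` to evaluate the cross terms with `phsum_second`
    let W : ι → Matrix m k ℂ := fun b => if b ∈ s then V b else 0
    have hW : ∀ g : ι → Fin 4, ∑ b ∈ s, ph (g b) • V b = phsum W g := by
      intro g
      simp [phsum, W, Finset.sum_ite_mem]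
    have hW1 : ∑ b, W b * (W b)ᴴ = ∑ b ∈ s, V b * (V b)ᴴ := by
      rw [← Finset.sum_subset (Finset.subset_univ s)]
      · exact Finset.sum_congr rfl fun b hb => by simp [W, hb]
      · intro b _ hb; simp [W, hb]
    have hW2 : ∑ b, (W b)ᴴ * W b = ∑ b ∈ s, (V b)ᴴ * V b := by
      rw [← Finset.sum_subset (Finset.subset_univ s)]
      · exact Finset.sum_congr rfl fun b hb => by simp [W, hb]
      · intro b _ hb; simp [W, hb]
    have t1 : ∑ g : ι → Fin 4, rt (V a * (V a)ᴴ * ((∑ b ∈ s, ph (g b) • V b) *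
        (∑ b ∈ s, ph (g b) • V b)ᴴ)) = cd ι * rt (V a * (V a)ᴴ * ∑ b ∈ s, V b * (V b)ᴴ) := by
      have := rt_phsum_second W (V a * (V a)ᴴ) (1 : Matrix k k ℂ)
      simpa only [Matrix.mul_one, hW, hW1] using this
    have t2 : ∑ g : ι → Fin 4, rt ((V a)ᴴ * V a * ((∑ b ∈ s, ph (g b) • V b)ᴴ *
        (∑ b ∈ s, ph (g b) • V b))) = cd ι * rt ((V a)ᴴ * V a * ∑ b ∈ s, (V b)ᴴ * V b) := by
      have h3 : ∀ X : Matrix m k ℂ, rt ((V a)ᴴ * V a * (Xᴴ * X)) =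
          rt (1 * (X * ((V a)ᴴ * V a) * Xᴴ)) := by
        intro X
        rw [Matrix.one_mul, rt_comm (X * ((V a)ᴴ * V a)), ← Matrix.mul_assoc Xᴴ]
        exact rt_comm _ _
      simp only [h3, hW]
      rw [rt_phsum_second, ← hW2, Matrix.mul_sum, Matrix.mul_sum, rt_sum, rt_sum]
      simp only [h3]
    rw [t1, t2] at key
    simp only [Finset.sum_insert ha, Matrix.add_mul, Matrix.mul_add, rt_add]
    have c1 := rt_comm (∑ b ∈ s, V b * (V b)ᴴ) (V a * (V a)ᴴ)
    have c2 := rt_comm (∑ b ∈ s, (V b)ᴴ * V b) ((V a)ᴴ * V a)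
    have p1 : 0 ≤ rt ((V a)ᴴ * V a * ((V a)ᴴ * V a)) :=
      rt_mul_nonneg (Matrix.posSemidef_conjTranspose_mul_self _)
        (Matrix.posSemidef_conjTranspose_mul_self _)
    have p2 := mul_nonneg (cd_pos (ι := ι)).le p1
    have e2 : ∑ g : ι → Fin 4, rt (V a * (V a)ᴴ * (V a * (V a)ᴴ)) =
      cd ι * rt (V a * (V a)ᴴ * (V a * (V a)ᴴ)) := by simp [cd]
    rw [e2] at key
    simp only [Finset.sum_insert ha, nsmul_eq_mul, Nat.cast_ofNat, Matrix.add_mul, Matrix.mul_add,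
      rt_add] at key
    rw [c1, c2]
    nlinarith [ih, key, p2]

/-- The fourth moment: the expected purity of a random superposition is at most the sum of the
purities of the two marginals of the ensemble average. -/
lemma phsum_fourth (V : ι → Matrix m k ℂ) :
    ∑ g : ι → Fin 4, rt (phsum V g * (phsum V g)ᴴ * (phsum V g * (phsum V g)ᴴ)) ≤
    cd ι * (rt ((∑ a, V a * (V a)ᴴ) * (∑ a, V a * (V a)ᴴ)) +
      rt ((∑ a, (V a)ᴴ * V a) * (∑ a, (V a)ᴴ * V a))) :=
  phsum_fourth_aux V Finset.univ

end phases

/-! ### Projections -/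

/-- Orthogonal projections, as matrices. -/
def IsPr {n : Type*} [Fintype n] (R : Matrix n n ℂ) : Prop := Rᴴ = R ∧ R * R = R

section proj
variable {n T : Type*} [Fintype n] [DecidableEq n]

omit [DecidableEq n] in
lemma IsPr.posSemidef {R : Matrix n n ℂ} (h : IsPr R) : R.PosSemidef := by
  have := Matrix.posSemidef_conjTranspose_mul_self R
  rwa [h.1, h.2] at this

lemma IsPr.zero : IsPr (0 : Matrix n n ℂ) := by simp [IsPr]

lemma IsPr.compl {R : Matrix n n ℂ} (h : IsPr R) : IsPr (1 - R) := by
  refine ⟨by simp [h.1], ?_⟩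
  simp [Matrix.sub_mul, Matrix.mul_sub, h.2]

omit [DecidableEq n] in
lemma IsPr.sub {R R' : Matrix n n ℂ} (h : IsPr R) (h' : IsPr R') (hR : R' * R = R) :
    IsPr (R' - R) := by
  have hR2 : R * R' = R := by
    have := congrArg Matrix.conjTranspose hR
    rwa [Matrix.conjTranspose_mul, h.1, h'.1] at this
  refine ⟨by simp [h.1, h'.1], ?_⟩
  simp [Matrix.sub_mul, Matrix.mul_sub, h.2, h'.2, hR, hR2]

/-- A projection can be enlarged by one dimension so as to fix a given vector. -/
lemma IsPr.add_vec {R : Matrix n n ℂ} (h : IsPr R) (v : n → ℂ) :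
    ∃ R', IsPr R' ∧ R' * R = R ∧ R' *ᵥ v = v ∧ rt R' ≤ rt R + 1 := by
  set u : n → ℂ := (1 - R) *ᵥ v with hu
  by_cases h0 : u = 0
  · refine ⟨R, h, h.2, ?_, by linarith⟩
    rw [hu, Matrix.sub_mulVec, Matrix.one_mulVec, sub_eq_zero] at h0
    exact h0.symm
  set s : ℂ := star u ⬝ᵥ u with hs
  have hs0 : s ≠ 0 := by
    rw [hs]; simpa [dotProduct_star_self_eq_zero] using h0
  have hss : star s = s := by
    simp [hs, dotProduct, mul_comm]
  have hRu : R *ᵥ u = 0 := by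
    rw [hu, Matrix.mulVec_mulVec, Matrix.mul_sub, h.2]; simp
  have huR : star u ᵥ* R = 0 := by
    rw [← h.1, ← Matrix.star_mulVec, hRu, star_zero]
  have huv : star u ⬝ᵥ v = s := by
    have : v = u + R *ᵥ v := by rw [hu, Matrix.sub_mulVec]; simp
    calc star u ⬝ᵥ v = star u ⬝ᵥ (u + R *ᵥ v) := congrArg _ this
      _ = s := by rw [dotProduct_add, Matrix.dotProduct_mulVec (star u) R, huR]; simp [hs]
  have a1 : R * Matrix.vecMulVec u (star u) = 0 := by
    rw [Matrix.mul_vecMulVec, hRu]; simp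
  have a2 : Matrix.vecMulVec u (star u) * R = 0 := by
    rw [Matrix.vecMulVec_mul, huR]; simp
  have a3 : Matrix.vecMulVec u (star u) * Matrix.vecMulVec u (star u) =
      s • Matrix.vecMulVec u (star u) := by
    rw [Matrix.vecMulVec_mul_vecMulVec, ← hs]; simp
  refine ⟨R + s⁻¹ • Matrix.vecMulVec u (star u), ⟨?_, ?_⟩, ?_, ?_, ?_⟩
  · rw [Matrix.conjTranspose_add, Matrix.conjTranspose_smul, h.1, Matrix.conjTranspose_vecMulVec,
      star_star, star_inv₀, hss]
  · simp only [Matrix.mul_add, Matrix.add_mul, h.2, Matrix.smul_mul, Matrix.mul_smul, a1, a2, a3]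
    simp [hs0]
  · simp [Matrix.add_mul, h.2, a2]
  · rw [Matrix.add_mulVec, Matrix.smul_mulVec, Matrix.vecMulVec_mulVec, huv]
    ext i
    simp only [hu, Matrix.sub_mulVec, Matrix.one_mulVec, Pi.add_apply, Pi.smul_apply, Pi.sub_apply]
    simp
    field_simp
    ring
  · rw [rt_add]
    simp only [rt, Matrix.trace_smul, Matrix.trace_vecMulVec, dotProduct_comm u, ← hs, smul_eq_mul]
    simp [hs0]

/-- A projection can be enlarged by at most `card T` dimensions so as to fix the columns of `Y`. -/
lemma IsPr.add_mat [Fintype T] {R : Matrix n n ℂ} (h : IsPr R) (Y : Matrix n T ℂ) :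
    ∃ R', IsPr R' ∧ R' * R = R ∧ R' * Y = Y ∧ rt R' ≤ rt R + Fintype.card T := by
  have key : ∀ s : Finset T, ∃ R', IsPr R' ∧ R' * R = R ∧ (∀ t ∈ s, R' *ᵥ (Y.col t) = Y.col t) ∧
      rt R' ≤ rt R + s.card := by
    intro s
    induction s using Finset.induction_on with
    | empty => exact ⟨R, h, h.2, by simp, by simp⟩
    | insert t s ht ih =>
      obtain ⟨R1, h1, h2, h3, h4⟩ := ih
      obtain ⟨R2, k1, k2, k3, k4⟩ := h1.add_vec (Y.col t)
      refine ⟨R2, k1, ?_, ?_, ?_⟩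
      · rw [← h2, ← Matrix.mul_assoc, k2]
      · intro t' ht'
        rcases Finset.mem_insert.1 ht' with rfl | ht'
        · exact k3
        · rw [← h3 t' ht', Matrix.mulVec_mulVec, k2]
      · rw [Finset.card_insert_of_notMem ht]; push_cast; linarith
  obtain ⟨R', h1, h2, h3, h4⟩ := key Finset.univ
  refine ⟨R', h1, h2, ?_, by simpa using h4⟩
  ext i t
  have := congrFun (h3 t (Finset.mem_univ _)) i
  simpa [Matrix.mul_apply, Matrix.mulVec, dotProduct] using this

end proj

/-- Dependent choice along a finite chain. -/
lemma exists_chain {α β : Type*} [Nonempty β] (inv : ℕ → α → Prop)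
    (step : ℕ → α → β → α → Prop) (N : ℕ) (a0 : α) (h0 : inv 0 a0)
    (h : ∀ i < N, ∀ a, inv i a → ∃ b a', step i a b a' ∧ inv (i + 1) a') :
    ∃ (a : ℕ → α) (b : ℕ → β), a 0 = a0 ∧ (∀ i ≤ N, inv i (a i)) ∧
      ∀ i < N, step i (a i) (b i) (a (i + 1)) := by
  have h' : ∀ i a, ∃ (b : β) (a' : α), i < N → inv i a → step i a b a' ∧ inv (i + 1) a' := by
    intro i a
    by_cases hi : i < N ∧ inv i a
    · obtain ⟨b, a', hh⟩ := h i hi.1 a hi.2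
      exact ⟨b, a', fun _ _ => hh⟩
    · exact ⟨Classical.arbitrary β, a, fun h1 h2 => absurd ⟨h1, h2⟩ hi⟩
  choose b a' hb using h'
  let s : ℕ → α := fun n => Nat.rec a0 (fun i a => a' i a) n
  have hinv : ∀ i ≤ N, inv i (s i) := by
    intro i
    induction i with
    | zero => intro _; exact h0
    | succ i ih => intro hi; exact (hb i (s i) hi (ih (by omega))).2
  exact ⟨s, fun i => b i (s i), rfl, hinv, fun i hi => (hb i (s i) hi (hinv i hi.le)).1⟩

/-! ### Measurements in random phase vectors and Bob's greedy code -/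

section stages
variable {A B C : Type*} [Fintype A] [DecidableEq A] [Fintype B] [DecidableEq B]
  [Fintype C] [DecidableEq C]

/-- Some outcome is at least as good as the uniform average. -/
lemma exists_ge_of_avg {ι : Type*} [Fintype ι] [DecidableEq ι] (f : (ι → Fin 4) → ℝ) (c : ℝ)
    (h : cd ι * c ≤ ∑ g, f g) : ∃ g, c ≤ f g := by
  have : ∑ _g : ι → Fin 4, c ≤ ∑ g, f g := by simpa [cd] using h
  obtain ⟨g, _, hg⟩ := Finset.exists_le_of_sum_le Finset.univ_nonempty this
  exact ⟨g, hg⟩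

/-- Rank-one POVM elements given by vectors of random phases. -/
def Eph (C : Type*) [Fintype C] [DecidableEq C] (g : C → Fin 4) : Matrix C C ℂ :=
  (((cd C)⁻¹ : ℝ) : ℂ) • Matrix.vecMulVec (fun c => ph (g c)) (star fun c => ph (g c))

lemma Eph_posSemidef (g : C → Fin 4) : (Eph C g).PosSemidef := by
  refine (Matrix.posSemidef_vecMulVec_self_star _).smul ?_
  exact_mod_cast (inv_pos.2 (cd_pos (ι := C))).le

lemma Eph_sum : ∑ g, Eph C g = 1 := by
  ext c c'
  have := ph_second (ι := C) c c'
  have h0 : (cd C : ℂ) ≠ 0 := by exact_mod_cast (cd_pos (ι := C)).ne'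
  simp only [Eph, Matrix.sum_apply, Matrix.smul_apply, Matrix.vecMulVec_apply, Pi.star_apply,
    smul_eq_mul, ← Finset.mul_sum, this, Matrix.one_apply]
  split_ifs <;> simp [h0]

/-- The same tensor as `Z`, with the roles of the indices `a` and `c` exchanged. -/
def swp (Z : A → Matrix B C ℂ) (c : C) : Matrix B A ℂ := Matrix.of fun b a => Z a b c

/-- The Gram matrix of a family of vectors of `B ⊗ C`. -/
def gram (Z : A → Matrix B C ℂ) : Matrix A A ℂ := Matrix.of fun a a' => ((Z a)ᴴ * Z a').trace

omit [DecidableEq A] [DecidableEq B] [Fintype B] [DecidableEq C] in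
lemma swp_sum (Z : A → Matrix B C ℂ) :
    ∑ c, swp Z c * (swp Z c)ᴴ = ∑ a, Z a * (Z a)ᴴ := by
  ext b b'
  simp only [Matrix.sum_apply, Matrix.mul_apply, Matrix.conjTranspose_apply, swp, Matrix.of_apply]
  exact Finset.sum_comm

omit [DecidableEq A] [Fintype A] [DecidableEq B] [DecidableEq C] in
lemma swp_gram (Z : A → Matrix B C ℂ) :
    ∑ c, (swp Z c)ᴴ * (swp Z c) = gram Z := by
  ext a a'
  simp [Matrix.sum_apply, Matrix.mul_apply, Matrix.trace, swp, gram]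

omit [DecidableEq A] [DecidableEq B] [Fintype B] in
/-- The average of Bob's unnormalized state after outcome `g` is again a random superposition,
with phases indexed by `C`; this brings `phsum_fourth` to bear on Bob's states. -/
lemma sum_Eph (Z : A → Matrix B C ℂ) (g : C → Fin 4) :
    ∑ a, Z a * Eph C g * (Z a)ᴴ =
      (((cd C)⁻¹ : ℝ) : ℂ) • (phsum (swp Z) g * (phsum (swp Z) g)ᴴ) := by
  have h1 : ∀ b a, phsum (swp Z) g b a = (Z a *ᵥ fun c => ph (g c)) b := by
    intro b a
    simp [phsum, swp, Matrix.sum_apply, Matrix.mulVec, dotProduct, mul_comm]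
  have h2 : ∀ a, Z a * Eph C g * (Z a)ᴴ = (((cd C)⁻¹ : ℝ) : ℂ) •
      Matrix.vecMulVec (Z a *ᵥ fun c => ph (g c)) (star (Z a *ᵥ fun c => ph (g c))) := by
    intro a
    rw [Eph, Matrix.mul_smul, Matrix.smul_mul, Matrix.mul_vecMulVec, Matrix.vecMulVec_mul,
      Matrix.star_mulVec]
  simp_rw [h2]
  ext b b'
  simp only [Matrix.sum_apply, Matrix.smul_apply, Matrix.vecMulVec_apply, Matrix.mul_apply,
    Matrix.conjTranspose_apply, h1, Pi.star_apply, Finset.smul_sum]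

/-- Bob's greedy code. Charlie's measurement in random phase vectors leaves Bob with pure states;
as long as the number of messages is small compared with the inverse purities of the ensemble
average on `B` and on `B ⊗ C`, code words can be chosen one after the other so that, for most
outcomes, Bob's new state is nearly orthogonal to the preceding ones. -/
lemma stage2 (Z : A → Matrix B C ℂ) (p s mm : ℝ) (M : ℕ) (hm : ∀ j < M, (j : ℝ) ≤ mm) (hs : 0 < s)
    (hp : rt ((∑ a, Z a * (Z a)ᴴ) * (∑ a, Z a * (Z a)ᴴ)) + rt (gram Z * gram Z) ≤ p) :
    ∃ (h : ℕ → A → Fin 4) (D : (C → Fin 4) → ℕ → Matrix B B ℂ),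
      (∀ g, ∀ j < M, (D g j).PosSemidef) ∧
      (∀ g, (1 - ∑ j ∈ Finset.range M, D g j).PosSemidef) ∧
      ∀ j < M, rt (∑ a, Z a * (Z a)ᴴ) - (s * mm + p / s) / 2 ≤
        ∑ g, rt (D g j * (phsum Z (h j) * Eph C g * (phsum Z (h j))ᴴ)) := by
  have hcC := cd_pos (ι := C)
  have hcA := cd_pos (ι := A)
  obtain ⟨Q, h, hQ0, hinv, hstep⟩ := exists_chain
    (α := (C → Fin 4) → Matrix B B ℂ) (β := A → Fin 4)
    (inv := fun i Q => ∀ g, IsPr (Q g) ∧ rt (Q g) ≤ i)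
    (step := fun _ Q h Q' => (∀ g, Q' g * Q g = Q g ∧
        Q' g * (phsum Z h * Eph C g) = phsum Z h * Eph C g) ∧
      rt (∑ a, Z a * (Z a)ᴴ) - (s * mm + p / s) / 2 ≤ rt (phsum Z h * (phsum Z h)ᴴ) -
        ∑ g, rt (Q g * (phsum Z h * Eph C g * (phsum Z h)ᴴ)))
    M (fun _ => 0) (fun g => ⟨IsPr.zero, by simp [rt]⟩) (by
      intro i hi Q hQ
      -- the best choice of `h` beats the average over `h`
      obtain ⟨h, hh⟩ : ∃ h : A → Fin 4, rt (∑ a, Z a * (Z a)ᴴ) - (s * mm + p / s) / 2 ≤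
          rt (phsum Z h * (phsum Z h)ᴴ) -
            ∑ g, rt (Q g * (phsum Z h * Eph C g * (phsum Z h)ᴴ)) := by
        apply exists_ge_of_avg
        rw [Finset.sum_sub_distrib, Finset.sum_comm]
        have e1 := rt_phsum_second Z 1 1
        simp only [Matrix.one_mul, Matrix.mul_one] at e1
        rw [e1]
        simp_rw [rt_phsum_second, sum_Eph]
        rw [← Finset.mul_sum, ← mul_sub]
        refine mul_le_mul_of_nonneg_left (sub_le_sub_left ?_ _) hcA.le
        have e2 : ∀ g, rt (Q g * ((((cd C)⁻¹ : ℝ) : ℂ) •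
            (phsum (swp Z) g * (phsum (swp Z) g)ᴴ))) ≤ (cd C)⁻¹ * ((s * mm +
              rt (phsum (swp Z) g * (phsum (swp Z) g)ᴴ *
                (phsum (swp Z) g * (phsum (swp Z) g)ᴴ)) / s) / 2) := by
          intro g
          rw [Matrix.mul_smul, rt_smul]
          refine mul_le_mul_of_nonneg_left ?_ (inv_pos.2 hcC).le
          -- `2 * s * rt (Q g * w) ≤ s ^ 2 * rt (Q g) + rt (w * w)`, by expanding the square of
          -- `w - s • Q g`; the rank bound controls the first term and the purity the second one
          set w := phsum (swp Z) g * (phsum (swp Z) g)ᴴ with hw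
          have hwh : wᴴ = w := by simp [hw]
          obtain ⟨⟨q1, q2⟩, q3⟩ := hQ g
          have q4 := rt_nonneg (Matrix.posSemidef_conjTranspose_mul_self
            (w - ((s : ℝ) : ℂ) • Q g))
          rw [Matrix.conjTranspose_sub, Matrix.conjTranspose_smul, hwh, q1] at q4
          simp only [Complex.star_def, Complex.conj_ofReal, Matrix.sub_mul, Matrix.mul_sub,
            Matrix.smul_mul, Matrix.mul_smul, q2, rt_sub, rt_smul, rt_comm w (Q g)] at q4
          have q5 : rt (Q g) ≤ mm := q3.trans (hm i hi)
          have q6 : s * (s * rt (Q g)) ≤ s * (s * mm) := by gcongr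
          have q7 : 2 * s * rt (Q g * w) ≤ s * (s * mm) + rt (w * w) := by linarith
          have q8 : rt (w * w) / s * s = rt (w * w) := div_mul_cancel₀ _ hs.ne'
          by_contra hcon
          push Not at hcon
          have := mul_lt_mul_of_pos_left hcon (mul_pos two_pos hs)
          nlinarith
        refine (Finset.sum_le_sum fun g _ => e2 g).trans ?_
        rw [← Finset.mul_sum, ← Finset.sum_div, Finset.sum_add_distrib, ← Finset.sum_div]
        have e3 := phsum_fourth (swp Z)
        rw [swp_sum, swp_gram] at e3
        have e4 : ∑ _g : C → Fin 4, s * mm = cd C * (s * mm) := by simp [cd]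
        rw [e4]
        have e5 : (∑ g, rt (phsum (swp Z) g * (phsum (swp Z) g)ᴴ *
            (phsum (swp Z) g * (phsum (swp Z) g)ᴴ))) / s ≤ cd C * p / s := by
          gcongr
          exact e3.trans (by gcongr)
        calc (cd C)⁻¹ * ((cd C * (s * mm) + _) / 2)
            ≤ (cd C)⁻¹ * ((cd C * (s * mm) + cd C * p / s) / 2) := by gcongr
          _ = (s * mm + p / s) / 2 := by field_simp
      choose Q' k1 k2 k3 k4 using fun g =>
        (hQ g).1.add_vec (phsum Z h *ᵥ fun c => ph (g c))
      refine ⟨h, Q', ⟨fun g => ⟨k2 g, ?_⟩, hh⟩, fun g => ⟨k1 g, ?_⟩⟩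
      · rw [Eph, Matrix.mul_smul, Matrix.mul_smul, Matrix.mul_vecMulVec, Matrix.mul_vecMulVec, k3]
      · push_cast; linarith [k4 g, (hQ g).2])
  refine ⟨h, fun g j => Q (j + 1) g - Q j g, fun g j hj => ?_, fun g => ?_, fun j hj => ?_⟩
  · exact ((hinv j hj.le g).1.sub (hinv (j + 1) hj g).1 ((hstep j hj).1 g).1).posSemidef
  · rw [Finset.sum_range_sub (fun j => Q j g), hQ0, sub_zero]
    exact (hinv M le_rfl g).1.compl.posSemidef
  · refine (hstep j hj).2.trans (le_of_eq ?_)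
    simp_rw [Matrix.sub_mul, rt_sub]
    rw [Finset.sum_sub_distrib]
    congr 1
    have : ∀ g, Q (j + 1) g * (phsum Z (h j) * Eph C g * (phsum Z (h j))ᴴ) =
        phsum Z (h j) * Eph C g * (phsum Z (h j))ᴴ := by
      intro g
      rw [← Matrix.mul_assoc, ((hstep j hj).1 g).2]
    simp_rw [this]
    rw [← rt_sum, ← Matrix.sum_mul, ← Matrix.mul_sum, Eph_sum, Matrix.mul_one]

end stages

/-! ### Charlie's greedy code for the first block -/

section stages
variable {A B C T : Type*} [Fintype A] [DecidableEq A] [Fintype B] [DecidableEq B]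
  [Fintype C] [DecidableEq C] [Fintype T]

lemma rt_le_of_psd {n : Type*} [Fintype n] {X Y : Matrix n n ℂ} (h : (Y - X).PosSemidef) :
    rt X ≤ rt Y := by
  have := rt_nonneg h
  rw [rt_sub] at this
  linarith

omit [DecidableEq B] [DecidableEq C] in
lemma rt_cut_eq (P : Matrix B B ℂ) (Q : Matrix C C ℂ) (hP : IsPr P) (hQ : IsPr Q)
    (X : Matrix B C ℂ) : rt (P * X * Q * (P * X * Q)ᴴ) = rt (P * (X * Q * Xᴴ)) := by
  have : P * X * Q * (P * X * Q)ᴴ = P * (X * Q * Xᴴ) * P := by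
    simp only [Matrix.conjTranspose_mul, hP.1, hQ.1, Matrix.mul_assoc]
    rw [← Matrix.mul_assoc Q Q, hQ.2]
  rw [this, rt_comm, ← Matrix.mul_assoc, hP.2]

/-- Cutting a bipartite vector with local projections loses at most the two local defects. -/
lemma rt_cut (P : Matrix B B ℂ) (Q : Matrix C C ℂ) (hP : IsPr P) (hQ : IsPr Q)
    (X : Matrix B C ℂ) :
    rt (X * Xᴴ) - rt ((1 - P) * (X * Xᴴ)) - rt ((1 - Q) * (Xᴴ * X)) ≤
      rt (P * X * Q * (P * X * Q)ᴴ) := by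
  have e1 := rt_cut_eq P Q hP hQ X
  have e2 := rt_mul_nonneg hP.compl.posSemidef (hQ.compl.posSemidef.mul_mul_conjTranspose_same X)
  have e3 : rt (Q * (Xᴴ * X)) = rt (X * Q * Xᴴ) := by
    rw [rt_comm Q, rt_comm (X * Q), Matrix.mul_assoc]
  have e4 : rt (Xᴴ * X) = rt (X * Xᴴ) := rt_comm _ _
  rw [e1]
  simp only [Matrix.sub_mul, Matrix.mul_sub, rt_sub, Matrix.one_mul, Matrix.mul_one] at e2 ⊢
  linarith

lemma rt_cut_le (P : Matrix B B ℂ) (Q : Matrix C C ℂ) (hP : IsPr P) (hQ : IsPr Q)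
    (X : Matrix B C ℂ) : rt (P * X * Q * (P * X * Q)ᴴ) ≤ rt (X * Xᴴ) := by
  have e1 := rt_cut_eq P Q hP hQ X
  have e2 := rt_mul_nonneg hP.compl.posSemidef (hQ.posSemidef.mul_mul_conjTranspose_same X)
  have e3 := rt_nonneg (hQ.compl.posSemidef.mul_mul_conjTranspose_same X)
  rw [e1]
  simp only [Matrix.sub_mul, Matrix.mul_sub, rt_sub, Matrix.one_mul, Matrix.mul_one] at e2 e3 ⊢
  linarith

omit [DecidableEq A] [DecidableEq B] [DecidableEq C] in
lemma phsum_cut (P : Matrix B B ℂ) (Q : Matrix C C ℂ) (V : A → Matrix B C ℂ) (g : A → Fin 4) :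
    phsum (fun a => P * V a * Q) g = P * phsum V g * Q := by
  simp [phsum, Matrix.mul_sum, Matrix.sum_mul]

omit [DecidableEq A] in
lemma psd_conj {m n : Type*} [Fintype m] [Fintype n] {Q : Matrix n n ℂ} (hQ : Q.PosSemidef)
    (V : A → Matrix m n ℂ) : (∑ a, V a * Q * (V a)ᴴ).PosSemidef :=
  Matrix.posSemidef_sum _ fun a _ => hQ.mul_mul_conjTranspose_same (V a)

omit [DecidableEq A] [DecidableEq B] in
/-- A second local cut only decreases a marginal. -/
lemma marg_cut {P : Matrix B B ℂ} {Q : Matrix C C ℂ} (hP : IsPr P) (hQ : IsPr Q)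
    (V : A → Matrix B C ℂ) :
    (P * (∑ a, V a * (V a)ᴴ) * P - ∑ a, P * V a * Q * (P * V a * Q)ᴴ).PosSemidef := by
  have h := psd_conj hQ.compl.posSemidef (fun a => P * V a)
  refine (congrArg Matrix.PosSemidef ?_).mp h
  rw [Matrix.mul_sum, Matrix.sum_mul, ← Finset.sum_sub_distrib]
  refine Finset.sum_congr rfl fun a _ => ?_
  rw [Matrix.conjTranspose_mul, Matrix.conjTranspose_mul, Matrix.conjTranspose_mul, hP.1, hQ.1,
    Matrix.mul_sub, Matrix.sub_mul, Matrix.mul_one]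
  congr 1
  · simp only [Matrix.mul_assoc]
  · calc _ = P * V a * (Q * Q) * ((V a)ᴴ * P) := by rw [hQ.2]
      _ = _ := by simp only [Matrix.mul_assoc]

omit [DecidableEq A] in
/-- The purity of a cut ensemble average, when the cut marginal is bounded by `l`. -/
lemma cut_purity {P : Matrix B B ℂ} {Q : Matrix C C ℂ} (hP : IsPr P) (hQ : IsPr Q)
    (V : A → Matrix B C ℂ) {l : ℝ} (hl : 0 ≤ l) (h1 : rt (∑ a, V a * (V a)ᴴ) = 1)
    (h : ((l : ℂ) • (1 : Matrix B B ℂ) - P * (∑ a, V a * (V a)ᴴ) * P).PosSemidef) :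
    rt ((∑ a, P * V a * Q * (P * V a * Q)ᴴ) * (∑ a, P * V a * Q * (P * V a * Q)ᴴ)) ≤ l := by
  have hp : (∑ a, P * V a * Q * (P * V a * Q)ᴴ).PosSemidef :=
    Matrix.posSemidef_sum _ fun a _ => Matrix.posSemidef_self_mul_conjTranspose _
  have h2 := rt_sq_le hp (l := l) (by simpa using h.add (marg_cut hP hQ V))
  have h3 : rt (∑ a, P * V a * Q * (P * V a * Q)ᴴ) ≤ 1 := by
    rw [← h1, rt_sum, rt_sum]
    exact Finset.sum_le_sum fun a _ => rt_cut_le P Q hP hQ (V a)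
  nlinarith

/-- Charlie's greedy code. Random superpositions of the vectors `V a`, cut to the typical
subspaces, have Schmidt rank at most `card T`, so their supports on `C` can be made nearly
orthogonal one after the other as long as the total rank stays small compared with `1 / lC`.
The cut code words also have a small purity on `B`. -/
lemma stage1 (V : A → Matrix B C ℂ) (hunit : ∀ g, rt (phsum V g * (phsum V g)ᴴ) = 1)
    (J : Matrix B T ℂ) {P : Matrix B B ℂ} (hJ : P = J * Jᴴ) (hP : IsPr P)
    {Q : Matrix C C ℂ} (hQ : IsPr Q) (lB lC η ε : ℝ) (hlB : 0 < lB) (hlC : 0 < lC)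
    (hε : 0 < ε) (hη : 2 * η + 2 * ε ≤ 1)
    (h1 : rt (∑ a, V a * (V a)ᴴ) = 1)
    (hB : rt ((1 - P) * ∑ a, V a * (V a)ᴴ) ≤ η)
    (hC : rt ((1 - Q) * ∑ a, (V a)ᴴ * V a) ≤ η)
    (hB' : ((lB : ℂ) • (1 : Matrix B B ℂ) - P * (∑ a, V a * (V a)ᴴ) * P).PosSemidef)
    (hC' : ((lC : ℂ) • (1 : Matrix C C ℂ) - Q * (∑ a, (V a)ᴴ * V a) * Q).PosSemidef)
    (N : ℕ) (hN : ∀ i < N, (i : ℝ) * Fintype.card T * lC ≤ ε) :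
    ∃ (g : ℕ → A → Fin 4) (D : ℕ → Matrix C C ℂ),
      (∀ i < N, IsPr (D i)) ∧ (1 - ∑ i ∈ Finset.range N, D i).PosSemidef ∧
      ∀ i < N,
        1 - 2 * η - 2 * ε ≤
          rt (P * phsum V (g i) * Q * D i * (P * phsum V (g i) * Q)ᴴ) ∧
        rt (P * phsum V (g i) * Q * (P * phsum V (g i) * Q)ᴴ *
          (P * phsum V (g i) * Q * (P * phsum V (g i) * Q)ᴴ)) ≤ (lB + lC) / ε := by
  have hcA := cd_pos (ι := A)
  set κ : ℝ := ε / (lB + lC) with hκ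
  have hκ0 : 0 < κ := by positivity
  set X : (A → Fin 4) → Matrix B C ℂ := fun g => P * phsum V g * Q with hX
  have hXr : ∀ g, phsum (fun a => P * V a * Q) g = X g := fun g => phsum_cut P Q V g
  set W : A → Matrix B C ℂ := fun a => P * V a * Q with hW
  obtain ⟨R, g, hR0, hinv, hstep⟩ := exists_chain
    (α := Matrix C C ℂ) (β := A → Fin 4)
    (inv := fun i R => IsPr R ∧ rt R ≤ i * Fintype.card T)
    (step := fun _ R g R' => R' * R = R ∧ X g * R' = X g ∧
      1 - 2 * η - 2 * ε ≤ rt (X g * (X g)ᴴ) - rt (X g * R * (X g)ᴴ) ∧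
      rt (X g * (X g)ᴴ * (X g * (X g)ᴴ)) ≤ (lB + lC) / ε)
    N 0 ⟨IsPr.zero, by simp [rt]⟩ (by
      intro i hi R hR
      obtain ⟨g, hg⟩ : ∃ g : A → Fin 4, 1 - 2 * η - 2 * ε ≤
          rt (X g * (X g)ᴴ) - rt (X g * R * (X g)ᴴ) -
            κ * rt (X g * (X g)ᴴ * (X g * (X g)ᴴ)) := by
        apply exists_ge_of_avg
        rw [Finset.sum_sub_distrib, Finset.sum_sub_distrib, ← Finset.mul_sum]
        -- the two cuts cost at most `2 * η` of the average norm
        have e1 := rt_phsum_second W 1 1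
        simp only [Matrix.one_mul, Matrix.mul_one, hXr] at e1
        have e2 : 1 - 2 * η ≤ rt (∑ a, W a * (W a)ᴴ) := by
          rw [rt_sum]
          have := Finset.sum_le_sum fun a (_ : a ∈ Finset.univ) => rt_cut P Q hP hQ (V a)
          rw [Finset.sum_sub_distrib, Finset.sum_sub_distrib, ← rt_sum, ← rt_sum, ← rt_sum,
            ← Matrix.mul_sum, ← Matrix.mul_sum] at this
          linarith
        -- `R` has rank at most `i * card T`, and the ensemble average on `C` is at most `lC`
        -- there, so the overlap with the supports already in use is at most `ε` on average
        have e3 := rt_phsum_second W 1 R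
        simp only [Matrix.one_mul, hXr] at e3
        have e4 : rt (∑ a, W a * R * (W a)ᴴ) ≤ ε := by
          have f1 : rt (∑ a, W a * R * (W a)ᴴ) ≤ rt (∑ a, V a * Q * R * (V a * Q)ᴴ) := by
            rw [rt_sum, rt_sum]
            refine Finset.sum_le_sum fun a _ => ?_
            have := rt_mul_nonneg hP.compl.posSemidef
              (hR.1.posSemidef.mul_mul_conjTranspose_same (V a * Q))
            rw [Matrix.sub_mul, Matrix.one_mul, rt_sub] at this
            refine le_trans (le_of_eq ?_) (sub_nonneg.1 this)
            simp only [hW]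
            have : P * V a * Q * R * (P * V a * Q)ᴴ = P * (V a * Q * R * (V a * Q)ᴴ) * P := by
              simp only [Matrix.conjTranspose_mul, hP.1, hQ.1, Matrix.mul_assoc]
            rw [this, rt_comm, ← Matrix.mul_assoc, hP.2]
          have f2 : rt (∑ a, V a * Q * R * (V a * Q)ᴴ) =
              rt (Q * (∑ a, (V a)ᴴ * V a) * Q * R) := by
            rw [Matrix.mul_sum, Matrix.sum_mul, Matrix.sum_mul, rt_sum, rt_sum]
            refine Finset.sum_congr rfl fun a _ => ?_
            rw [Matrix.mul_assoc (V a * Q), rt_comm, Matrix.conjTranspose_mul, hQ.1,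
              Matrix.mul_assoc, rt_comm]
            simp only [Matrix.mul_assoc]
          have f3 := rt_mul_nonneg hC' hR.1.posSemidef
          rw [Matrix.sub_mul, rt_sub, Matrix.smul_mul, rt_smul, Matrix.one_mul] at f3
          have f4 := mul_le_mul_of_nonneg_left hR.2 hlC.le
          have f5 := hN i hi
          linarith
        -- weighted by `κ`, the average purity also costs at most `ε`; this is why the purity of
        -- the chosen code word is at most `1 / κ = (lB + lC) / ε`
        have e5 := phsum_fourth W
        simp only [hXr] at e5
        have e6 := cut_purity hP hQ V hlB.le h1 hB'
        have e7 := cut_purity hQ hP (fun a => (V a)ᴴ) (l := lC) hlC.le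
          (by
            rw [← h1, rt_sum, rt_sum]
            refine Finset.sum_congr rfl fun a _ => ?_
            rw [Matrix.conjTranspose_conjTranspose, rt_comm])
          (by simpa only [Matrix.conjTranspose_conjTranspose] using hC')
        have e8 : ∀ a, Q * (V a)ᴴ * P = (W a)ᴴ := by
          intro a
          simp only [hW, Matrix.conjTranspose_mul, hP.1, hQ.1, Matrix.mul_assoc]
        simp only [e8, Matrix.conjTranspose_conjTranspose] at e7
        have e9 : κ * ∑ g, rt (X g * (X g)ᴴ * (X g * (X g)ᴴ)) ≤ cd A * ε := by
          calc κ * ∑ g, rt (X g * (X g)ᴴ * (X g * (X g)ᴴ)) ≤ κ * (cd A * (lB + lC)) := by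
                refine mul_le_mul_of_nonneg_left (e5.trans ?_) hκ0.le
                exact mul_le_mul_of_nonneg_left (add_le_add e6 e7) hcA.le
            _ = cd A * ε := by rw [hκ]; field_simp
        rw [e1, e3]
        have e10 := mul_le_mul_of_nonneg_left e2 hcA.le
        have e11 := mul_le_mul_of_nonneg_left e4 hcA.le
        linarith
      obtain ⟨R', k1, k2, k3, k4⟩ := hR.1.add_mat (Q * (phsum V g)ᴴ * J)
      have hup : rt (X g * (X g)ᴴ) ≤ 1 := (rt_cut_le P Q hP hQ _).trans (hunit g).le
      have hlow : 0 ≤ rt (X g * R * (X g)ᴴ) :=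
        rt_nonneg (hR.1.posSemidef.mul_mul_conjTranspose_same _)
      have hpur : 0 ≤ rt (X g * (X g)ᴴ * (X g * (X g)ᴴ)) :=
        rt_mul_nonneg (Matrix.posSemidef_self_mul_conjTranspose _)
          (Matrix.posSemidef_self_mul_conjTranspose _)
      refine ⟨g, R', ⟨k2, ?_, ?_, ?_⟩, k1, ?_⟩
      · have e : R' * (X g)ᴴ = (X g)ᴴ := by
          have : (X g)ᴴ = Q * (phsum V g)ᴴ * J * Jᴴ := by
            simp only [hX, Matrix.conjTranspose_mul, hP.1, hQ.1, Matrix.mul_assoc, ← hJ]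
          rw [this, ← Matrix.mul_assoc, k3]
        have := congrArg Matrix.conjTranspose e
        rwa [Matrix.conjTranspose_mul, Matrix.conjTranspose_conjTranspose, k1.1] at this
      · have := mul_nonneg hκ0.le hpur
        linarith
      · rw [le_div_iff₀ hε]
        have : κ * rt (X g * (X g)ᴴ * (X g * (X g)ᴴ)) ≤ 1 := by linarith
        rw [hκ, div_mul_eq_mul_div, div_le_one (by positivity)] at this
        linarith
      · push_cast; linarith [hR.2])
  refine ⟨g, fun i => R (i + 1) - R i, fun i hi => ?_, ?_, fun i hi => ⟨?_, (hstep i hi).2.2.2⟩⟩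
  · exact (hinv i hi.le).1.sub (hinv (i + 1) hi).1 (hstep i hi).1
  · rw [Finset.sum_range_sub, hR0, sub_zero]
    exact (hinv N le_rfl).1.compl.posSemidef
  · obtain ⟨-, s2, s3, -⟩ := hstep i hi
    change _ ≤ rt (X (g i) * (R (i + 1) - R i) * (X (g i))ᴴ)
    rw [Matrix.mul_sub, s2, Matrix.sub_mul, rt_sub]
    exact s3

end stages

/-! ### The code for the second block, and the combined code -/

section combine
open scoped Kronecker
variable {A B C A' B' C' T : Type*} [Fintype A] [DecidableEq A] [Fintype B] [DecidableEq B]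
  [Fintype C] [DecidableEq C] [Fintype A'] [DecidableEq A'] [Fintype B'] [DecidableEq B']
  [Fintype C'] [DecidableEq C'] [Fintype T]

omit [DecidableEq B] in
lemma rt_coe {X : Matrix B B ℂ} (h : X.PosSemidef) : X.trace = (rt X : ℂ) := by
  have := (Complex.le_def.1 h.trace_nonneg).2
  apply Complex.ext
  · simp [rt]
  · simpa using this.symm

omit [DecidableEq B] [DecidableEq B'] in
lemma rt_kron {X : Matrix B B ℂ} (h : X.PosSemidef) (Y : Matrix B' B' ℂ) :
    rt (X ⊗ₖ Y) = rt X * rt Y := by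
  rw [rt, Matrix.trace_kronecker, rt_coe h, Complex.re_ofReal_mul, rt, rt]

omit [Fintype B] [DecidableEq B] [Fintype C] [DecidableEq C] [Fintype B'] [DecidableEq B']
  [Fintype C'] [DecidableEq C'] [DecidableEq A] in
lemma kron_sum (X : Matrix B C ℂ) (Y : A → Matrix B' C' ℂ) :
    ∑ a, X ⊗ₖ Y a = X ⊗ₖ ∑ a, Y a := by
  ext b c
  simp [Matrix.sum_apply, Matrix.kroneckerMap_apply, Finset.mul_sum]

omit [Fintype B] [DecidableEq B] [Fintype C] [DecidableEq C] [Fintype B'] [DecidableEq B']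
  [Fintype C'] [DecidableEq C'] [DecidableEq A] in
lemma sum_kron (X : A → Matrix B C ℂ) (Y : Matrix B' C' ℂ) :
    ∑ a, X a ⊗ₖ Y = (∑ a, X a) ⊗ₖ Y := by
  ext b c
  simp [Matrix.sum_apply, Matrix.kroneckerMap_apply, Finset.sum_mul]

omit [Fintype B] [DecidableEq B] [Fintype C] [DecidableEq C] [Fintype B'] [DecidableEq B']
  [Fintype C'] [DecidableEq C'] [DecidableEq A] in
lemma phsum_kron (X : Matrix B C ℂ) (Y : A → Matrix B' C' ℂ) (g : A → Fin 4) :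
    phsum (fun a => X ⊗ₖ Y a) g = X ⊗ₖ phsum Y g := by
  simp only [phsum, ← kron_sum, Matrix.kronecker_smul]

omit [DecidableEq A] [DecidableEq C] in
/-- Local projections on `B` only decrease the Gram matrix. -/
lemma gram_cut {P : Matrix B B ℂ} (hP : IsPr P) (V : A → Matrix B C ℂ) :
    (gram V - gram fun a => P * V a).PosSemidef := by
  have h : (∑ c, (swp V c)ᴴ * (1 - P) * swp V c).PosSemidef :=
    Matrix.posSemidef_sum _ fun c _ => by
      simpa using hP.compl.posSemidef.conjTranspose_mul_mul_same (swp V c)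
  refine (congrArg Matrix.PosSemidef ?_).mp h
  have e : ∀ c, swp (fun a => P * V a) c = P * swp V c := by
    intro c; ext b a; simp [swp, Matrix.mul_apply]
  rw [← swp_gram, ← swp_gram, ← Finset.sum_sub_distrib]
  refine Finset.sum_congr rfl fun c _ => ?_
  rw [e, Matrix.mul_sub, Matrix.sub_mul, Matrix.mul_one, Matrix.conjTranspose_mul, hP.1]
  congr 1
  calc _ = (swp V c)ᴴ * (P * P) * swp V c := by rw [hP.2]
    _ = _ := by simp only [Matrix.mul_assoc]

omit [DecidableEq A] [DecidableEq B] [DecidableEq C] in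
lemma gram_psd (V : A → Matrix B C ℂ) : (gram V).PosSemidef := by
  rw [← swp_gram]
  exact Matrix.posSemidef_sum _ fun c _ => Matrix.posSemidef_conjTranspose_mul_self _

omit [DecidableEq A] [DecidableEq B] [DecidableEq C] in
lemma rt_gram (V : A → Matrix B C ℂ) : rt (gram V) = rt (∑ a, V a * (V a)ᴴ) := by
  rw [← swp_gram, ← swp_sum, rt_sum, rt_sum]
  exact Finset.sum_congr rfl fun c _ => rt_comm _ _

/-- The second code, used on top of one code word `X` of the first code, whose reduced state on
`B` has small purity: Bob's noise from the first block is what limits the second one. -/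
lemma stage3_one (X : Matrix B C ℂ) {D : Matrix C C ℂ} (hD : IsPr D) (V : A' → Matrix B' C' ℂ)
    {P : Matrix B' B' ℂ} (hP : IsPr P) (c κ η lB lA s mm : ℝ) (M : ℕ)
    (hm : ∀ j < M, (j : ℝ) ≤ mm) (hs : 0 < s) (hc : 0 ≤ c) (hκ : 0 ≤ κ) (hlB : 0 ≤ lB)
    (hlA : 0 ≤ lA)
    (hX1 : rt (X * Xᴴ) ≤ 1) (hXc : c ≤ rt (X * D * Xᴴ)) (hXκ : rt (X * Xᴴ * (X * Xᴴ)) ≤ κ)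
    (h1 : rt (∑ a, V a * (V a)ᴴ) = 1)
    (hB : rt ((1 - P) * ∑ a, V a * (V a)ᴴ) ≤ η)
    (hB' : ((lB : ℂ) • (1 : Matrix B' B' ℂ) - P * (∑ a, V a * (V a)ᴴ) * P).PosSemidef)
    (hA' : ((lA : ℂ) • (1 : Matrix A' A' ℂ) - gram V).PosSemidef) :
    ∃ (h : ℕ → A' → Fin 4) (E : (C × C' → Fin 4) → ℕ → Matrix (B × B') (B × B') ℂ),
      (∀ g, ∀ j < M, (E g j).PosSemidef) ∧
      (∀ g, (1 - ∑ j ∈ Finset.range M, E g j).PosSemidef) ∧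
      ∀ j < M, c * (1 - η) - (s * mm + (κ * lB + lA) / s) / 2 ≤
        ∑ g, rt (E g j * ((X * D) ⊗ₖ (P * phsum V (h j)) * Eph (C × C') g *
          ((X * D) ⊗ₖ (P * phsum V (h j)))ᴴ)) := by
  set Z : A' → Matrix (B × B') (C × C') ℂ := fun a => (X * D) ⊗ₖ (P * V a) with hZ
  set K1 := X * D * Xᴴ with hK1
  set K2 := P * (∑ a, V a * (V a)ᴴ) * P with hK2
  have hS : (∑ a, V a * (V a)ᴴ).PosSemidef :=
    Matrix.posSemidef_sum _ fun a _ => Matrix.posSemidef_self_mul_conjTranspose _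
  have k1 : K1.PosSemidef := hD.posSemidef.mul_mul_conjTranspose_same X
  have k2 : K2.PosSemidef := by
    have := hS.mul_mul_conjTranspose_same P
    rwa [hP.1] at this
  have hXD : X * D * (X * D)ᴴ = K1 := by
    rw [Matrix.conjTranspose_mul, hD.1, ← Matrix.mul_assoc, Matrix.mul_assoc X, hD.2]
  have hZZ : ∑ a, Z a * (Z a)ᴴ = K1 ⊗ₖ K2 := by
    have : ∀ a, Z a * (Z a)ᴴ = K1 ⊗ₖ (P * (V a * (V a)ᴴ) * P) := by
      intro a
      simp only [hZ]
      rw [Matrix.conjTranspose_kronecker, ← Matrix.mul_kronecker_mul, hXD]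
      simp only [Matrix.conjTranspose_mul, hP.1, Matrix.mul_assoc]
    simp_rw [this]
    rw [kron_sum, hK2, Matrix.mul_sum, Matrix.sum_mul]
  have hr2 : rt K2 = rt (P * ∑ a, V a * (V a)ᴴ) := by
    rw [hK2, rt_comm, ← Matrix.mul_assoc, hP.2]
  have hr2a : 1 - η ≤ rt K2 := by
    rw [Matrix.sub_mul, Matrix.one_mul, rt_sub, h1] at hB
    linarith
  have hr2b : rt K2 ≤ 1 := by
    have := rt_mul_nonneg hP.compl.posSemidef hS
    rw [Matrix.sub_mul, Matrix.one_mul, rt_sub, h1] at this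
    linarith
  have hr1b : rt K1 ≤ rt (X * Xᴴ) ∧ rt (K1 * K1) ≤ κ := by
    have : (X * Xᴴ - K1).PosSemidef := by
      have := hD.compl.posSemidef.mul_mul_conjTranspose_same X
      rwa [Matrix.mul_sub, Matrix.sub_mul, Matrix.mul_one] at this
    exact ⟨rt_le_of_psd this, (rt_sq_mono k1 this).trans hXκ⟩
  have hpB : rt ((K1 ⊗ₖ K2) * (K1 ⊗ₖ K2)) ≤ κ * lB := by
    have hsq : (K1 * K1).PosSemidef := by
      have := Matrix.posSemidef_conjTranspose_mul_self K1
      rwa [k1.isHermitian.eq] at this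
    rw [← Matrix.mul_kronecker_mul, rt_kron hsq]
    have a1 := rt_sq_le k2 hB'
    have a2 := mul_le_mul_of_nonneg_left hr2b hlB
    exact mul_le_mul hr1b.2 (by linarith) (rt_mul_nonneg k2 k2) hκ
  have hgram : gram Z = ((rt K1 : ℝ) : ℂ) • gram (fun a => P * V a) := by
    ext a a'
    simp only [gram, Matrix.of_apply, Matrix.smul_apply, smul_eq_mul, hZ]
    rw [Matrix.conjTranspose_kronecker, ← Matrix.mul_kronecker_mul, Matrix.trace_kronecker,
      Matrix.trace_mul_comm _ (X * D), hXD, rt_coe k1]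
  have hpA : rt (gram Z * gram Z) ≤ lA := by
    have hle : ((lA : ℂ) • (1 : Matrix A' A' ℂ) - gram Z).PosSemidef := by
      have t1 : (((1 - rt K1 : ℝ) : ℂ) • gram (fun a => P * V a)).PosSemidef := by
        refine (gram_psd _).smul ?_
        exact_mod_cast sub_nonneg.2 (hr1b.1.trans hX1)
      refine (congrArg Matrix.PosSemidef ?_).mp ((hA'.add (gram_cut hP V)).add t1)
      rw [hgram]
      push_cast
      rw [sub_smul, one_smul]
      abel
    have a1 := rt_sq_le (gram_psd Z) hle
    have a2 : rt (gram Z) ≤ 1 := by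
      rw [rt_gram, hZZ, rt_kron k1]
      exact mul_le_one₀ (hr1b.1.trans hX1) (rt_nonneg k2) hr2b
    nlinarith
  obtain ⟨h, E, e1, e2, e3⟩ := stage2 Z (κ * lB + lA) s mm M hm hs (by
    rw [hZZ]; exact add_le_add hpB hpA)
  refine ⟨h, E, e1, e2, fun j hj => ?_⟩
  have e4 := e3 j hj
  have e5 : ∀ g, phsum Z g = (X * D) ⊗ₖ (P * phsum V g) := by
    intro g
    rw [hZ, phsum_kron]
    congr 1
    simp [phsum, Matrix.mul_sum]
  simp only [e5] at e4
  refine le_trans ?_ e4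
  rw [hZZ, rt_kron k1]
  have a1 := mul_le_mul_of_nonneg_left hr2a hc
  have a2 := mul_le_mul_of_nonneg_right hXc (rt_nonneg k2)
  linarith

/-- The combined code. Charlie first identifies the code word `i` of the first block and then
measures both blocks in a random phase basis; Bob uses the outcome to read off the message `j`
of the second block. -/
lemma stage3 (V : A → Matrix B C ℂ) (hunit : ∀ g, rt (phsum V g * (phsum V g)ᴴ) = 1)
    (J : Matrix B T ℂ) {P : Matrix B B ℂ} (hJ : P = J * Jᴴ) (hP : IsPr P)
    {Q : Matrix C C ℂ} (hQ : IsPr Q) (V' : A' → Matrix B' C' ℂ) {P' : Matrix B' B' ℂ}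
    (hP' : IsPr P') (lB lC lB' lA' η ε mm : ℝ) (hlB : 0 < lB) (hlC : 0 < lC)
    (hlB' : 0 ≤ lB') (hlA' : 0 ≤ lA') (hmm : 0 < mm)
    (hε : 0 < ε) (hη : 2 * η + 2 * ε ≤ 1)
    (h1 : rt (∑ a, V a * (V a)ᴴ) = 1)
    (hB : rt ((1 - P) * ∑ a, V a * (V a)ᴴ) ≤ η)
    (hC : rt ((1 - Q) * ∑ a, (V a)ᴴ * V a) ≤ η)
    (hlB1 : ((lB : ℂ) • (1 : Matrix B B ℂ) - P * (∑ a, V a * (V a)ᴴ) * P).PosSemidef)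
    (hlC1 : ((lC : ℂ) • (1 : Matrix C C ℂ) - Q * (∑ a, (V a)ᴴ * V a) * Q).PosSemidef)
    (h1' : rt (∑ a, V' a * (V' a)ᴴ) = 1)
    (hB' : rt ((1 - P') * ∑ a, V' a * (V' a)ᴴ) ≤ η)
    (hlB2 : ((lB' : ℂ) • (1 : Matrix B' B' ℂ) - P' * (∑ a, V' a * (V' a)ᴴ) * P').PosSemidef)
    (hlA2 : ((lA' : ℂ) • (1 : Matrix A' A' ℂ) - gram V').PosSemidef)
    (N : ℕ) (hN : ∀ i < N, (i : ℝ) * Fintype.card T * lC ≤ ε)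
    (M : ℕ) (hM : ∀ j < M, (j : ℝ) ≤ mm)
    (hp : mm * ((lB + lC) / ε * lB' + lA') ≤ ε ^ 2) :
    ∃ (g : Fin N → A → Fin 4) (h : Fin N × Fin M → A' → Fin 4)
      (E : Fin N × (C × C' → Fin 4) → Matrix (C × C') (C × C') ℂ)
      (F : Fin N × (C × C' → Fin 4) → Fin N × Fin M → Matrix (B × B') (B × B') ℂ),
      (∀ x, (E x).PosSemidef) ∧ (1 - ∑ x, E x).PosSemidef ∧
      (∀ x y, (F x y).PosSemidef) ∧ (∀ x, (1 - ∑ y, F x y).PosSemidef) ∧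
      ∀ y, 1 - 3 * η - 3 * ε ≤ ∑ x, rt (F x y *
        ((phsum V (g y.1) ⊗ₖ phsum V' (h y)) * E x * (phsum V (g y.1) ⊗ₖ phsum V' (h y))ᴴ)) := by
  obtain ⟨g, D, d1, d2, d3⟩ := stage1 V hunit J hJ hP hQ lB lC η ε hlB hlC hε hη h1 hB hC
    hlB1 hlC1 N hN
  have hη0 : 0 ≤ η := (rt_mul_nonneg hP.compl.posSemidef
    (Matrix.posSemidef_sum _ fun a _ => Matrix.posSemidef_self_mul_conjTranspose _)).trans hB
  have key : ∀ i : Fin N, _ := fun i => stage3_one (P * phsum V (g i) * Q) (d1 i i.2) V' hP'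
    (1 - 2 * η - 2 * ε) ((lB + lC) / ε) η lB' lA' (ε / mm) mm M hM (by positivity)
    (by linarith) (by positivity) hlB' hlA' ((rt_cut_le P Q hP hQ _).trans (hunit _).le)
    (d3 i i.2).1 (d3 i i.2).2 h1' hB' hlB2 hlA2
  choose h G k1 k2 k3 using key
  -- the operators `L i` are the first measurement of Charlie, which identifies `i`; the effect of
  -- his second measurement is `Eph`, sandwiched between `L i` and its adjoint
  set L : Fin N → Matrix (C × C') (C × C') ℂ := fun i => (Q * D i) ⊗ₖ (1 : Matrix C' C' ℂ) with hL
  have hLL : ∀ i : Fin N, L i * (L i)ᴴ = (Q * D i * Q) ⊗ₖ (1 : Matrix C' C' ℂ) := by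
    intro i
    simp only [hL]
    rw [Matrix.conjTranspose_kronecker, ← Matrix.mul_kronecker_mul, Matrix.conjTranspose_mul,
      (d1 i i.2).1, hQ.1, ← Matrix.mul_assoc, Matrix.mul_assoc Q, (d1 i i.2).2]
    simp
  set PP : Matrix (B × B') (B × B') ℂ := P ⊗ₖ P' with hPP
  have hPPpr : IsPr PP := by
    constructor
    · rw [hPP, Matrix.conjTranspose_kronecker, hP.1, hP'.1]
    · rw [hPP, ← Matrix.mul_kronecker_mul, hP.2, hP'.2]
  refine ⟨fun i => g i, fun y => h y.1 y.2, fun x => L x.1 * Eph (C × C') x.2 * (L x.1)ᴴ,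
    fun x y => if y.1 = x.1 then PP * G x.1 x.2 y.2 * PP else 0, fun x => ?_, ?_, fun x y => ?_,
    fun x => ?_, fun y => ?_⟩
  · exact (Eph_posSemidef _).mul_mul_conjTranspose_same _
  · rw [Fintype.sum_prod_type]
    have : ∀ i, ∑ x, L i * Eph (C × C') x * (L i)ᴴ = L i * (L i)ᴴ := by
      intro i
      rw [← Matrix.sum_mul, ← Matrix.mul_sum, Eph_sum, Matrix.mul_one]
    simp only [this, hLL]
    rw [sum_kron, ← Matrix.sum_mul, ← Matrix.mul_sum, Fin.sum_univ_eq_sum_range D]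
    have t1 := d2.mul_mul_conjTranspose_same Q
    rw [hQ.1, Matrix.mul_sub, Matrix.sub_mul, Matrix.mul_one, hQ.2] at t1
    have t2 := (t1.add hQ.compl.posSemidef).kronecker
      (Matrix.PosSemidef.one : (1 : Matrix C' C' ℂ).PosSemidef)
    refine (congrArg Matrix.PosSemidef ?_).mp t2
    ext a b
    have e : (1 : Matrix (C × C') (C × C') ℂ) a b =
        (1 : Matrix C C ℂ) a.1 b.1 * (1 : Matrix C' C' ℂ) a.2 b.2 := by
      rw [← Matrix.one_kronecker_one]; rfl
    simp only [Matrix.kroneckerMap_apply, Matrix.sub_apply, Matrix.add_apply, e]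
    ring
  · dsimp only
    split_ifs
    · have := (k1 x.1 x.2 y.2 y.2.2).mul_mul_conjTranspose_same PP
      rwa [hPPpr.1] at this
    · exact Matrix.PosSemidef.zero
  · have : ∑ y : Fin N × Fin M, (if y.1 = x.1 then PP * G x.1 x.2 y.2 * PP else 0) =
        PP * (∑ j ∈ Finset.range M, G x.1 x.2 j) * PP := by
      rw [Fintype.sum_prod_type, Finset.sum_comm, Matrix.mul_sum, Matrix.sum_mul,
        ← Fin.sum_univ_eq_sum_range (fun j => PP * G x.1 x.2 j * PP)]
      simp
    rw [this]
    have t1 := (k2 x.1 x.2).mul_mul_conjTranspose_same PP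
    rw [hPPpr.1, Matrix.mul_sub, Matrix.sub_mul, Matrix.mul_one, hPPpr.2] at t1
    simpa using t1.add hPPpr.compl.posSemidef
  · obtain ⟨i, j⟩ := y
    have e1 := k3 i j j.2
    rw [Fintype.sum_prod_type, Finset.sum_eq_single i]
    · have e2 : 1 - 3 * η - 3 * ε ≤ (1 - 2 * η - 2 * ε) * (1 - η) -
          (ε / mm * mm + ((lB + lC) / ε * lB' + lA') / (ε / mm)) / 2 := by
        have f1 : ε / mm * mm = ε := by field_simp
        have f2 : ((lB + lC) / ε * lB' + lA') / (ε / mm) ≤ ε := by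
          rw [div_le_iff₀ (by positivity), mul_div_assoc', le_div_iff₀ hmm]
          linarith
        rw [f1]
        nlinarith
      refine (e2.trans e1).trans (le_of_eq (Finset.sum_congr rfl fun x _ => ?_))
      have e3 : (P * phsum V (g i) * Q * D i) ⊗ₖ (P' * phsum V' (h i j)) =
          PP * (phsum V (g i) ⊗ₖ phsum V' (h i j)) * L i := by
        rw [hPP, hL, ← Matrix.mul_kronecker_mul, ← Matrix.mul_kronecker_mul, Matrix.mul_one]
        simp only [Matrix.mul_assoc]
      rw [e3]
      simp only [if_true, Matrix.conjTranspose_mul, hPPpr.1]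
      simp only [Matrix.mul_assoc]
      rw [rt_comm PP]
      simp only [Matrix.mul_assoc]
    · intro i' _ hi
      simp [Ne.symm hi, rt]
    · simp

end combine

/-! ### From matrices to one-way protocols -/

section locc

/-- The word of pairs with given component words. -/
def zipw {n dB dC : ℕ} (b : Fin n → Fin dB) (c : Fin n → Fin dC) : Fin n → Fin dB × Fin dC :=
  fun k => (b k, c k)

lemma sum_zipw {n dB dC : ℕ} {R : Type*} [AddCommMonoid R] (F : (Fin n → Fin dB × Fin dC) → R) :
    ∑ f, F f = ∑ b, ∑ c, F (zipw b c) := by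
  rw [← Fintype.sum_prod_type' (fun b c => F (zipw b c))]
  refine Fintype.sum_equiv (Equiv.arrowProdEquivProdArrow (Fin n) (fun _ => Fin dB) (fun _ => Fin dC)) _ _ fun f => ?_
  rfl

/-- Incomplete measurements of Charlie and Bob can be completed to a one-way protocol: Charlie
gets one further outcome, and Bob assigns what is missing to a fixed message. Charlie's POVM
elements get transposed, as the bipartite vectors are treated as matrices. -/
lemma locc_assemble {n dB dC : ℕ} {Bt Ct X I : Type*} [Fintype Bt] [Fintype Ct] [Fintype X]
    [Fintype I] [DecidableEq I] [Nonempty I] [DecidableEq Bt] [DecidableEq Ct]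
    (eB : (Fin n → Fin dB) ≃ Bt) (eC : (Fin n → Fin dC) ≃ Ct) (Y : I → Matrix Bt Ct ℂ)
    (E : X → Matrix Ct Ct ℂ) (F : X → I → Matrix Bt Bt ℂ)
    (hE : ∀ x, (E x).PosSemidef) (hE1 : (1 - ∑ x, E x).PosSemidef)
    (hF : ∀ x i, (F x i).PosSemidef) (hF1 : ∀ x, (1 - ∑ i, F x i).PosSemidef)
    {N : ℕ} (e : Fin N ≃ I) :
    ∃ Np : Fin N → Matrix (Fin n → Fin dB × Fin dC) (Fin n → Fin dB × Fin dC) ℂ,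
      IsOneWayLOCC Np ∧ ∀ (i : Fin N) (φ : (Fin n → Fin dB × Fin dC) → ℂ),
        (∀ b c, φ (zipw b c) = Y (e i) (eB b) (eC c)) →
        ∑ x, rt (F x (e i) * (Y (e i) * E x * (Y (e i))ᴴ)) ≤
          (Matrix.trace (pureState φ * Np i)).re := by
  obtain ⟨i0⟩ := (inferInstance : Nonempty I)
  set E' : Option X → Matrix Ct Ct ℂ := fun o => o.elim (1 - ∑ x, E x) E with hE'
  set F' : Option X → I → Matrix Bt Bt ℂ := fun o i => o.elim (if i = i0 then 1 else 0)
    (fun x => F x i + if i = i0 then 1 - ∑ j, F x j else 0) with hF'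
  have hE'p : ∀ o, (E' o).PosSemidef := by
    rintro (_ | x)
    · exact hE1
    · exact hE x
  have hE's : ∑ o, E' o = 1 := by simp [Fintype.sum_option, hE']
  have hF'p : ∀ o i, (F' o i).PosSemidef := by
    rintro (_ | x) i
    · simp only [hF', Option.elim]
      split_ifs
      · exact Matrix.PosSemidef.one
      · exact Matrix.PosSemidef.zero
    · simp only [hF', Option.elim]
      split_ifs
      · exact (hF x i).add (hF1 x)
      · simpa using hF x i
  have hF's : ∀ o, ∑ i, F' o i = 1 := by
    rintro (_ | x) <;> simp [hF', Finset.sum_add_distrib]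
  let eX := Fintype.equivFin (Option X)
  set Bm : Fin (Fintype.card (Option X)) → Fin N → Matrix (Fin n → Fin dB) (Fin n → Fin dB) ℂ :=
    fun x i => (F' (eX.symm x) (e i)).submatrix eB eB with hBm
  set Mm : Fin (Fintype.card (Option X)) → Matrix (Fin n → Fin dC) (Fin n → Fin dC) ℂ :=
    fun x => (E' (eX.symm x))ᵀ.submatrix eC eC with hMm
  set Np : Fin N → Matrix (Fin n → Fin dB × Fin dC) (Fin n → Fin dB × Fin dC) ℂ :=
    fun i f g => ∑ x, Bm x i (fun k => (f k).1) (fun k => (g k).1) *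
      Mm x (fun k => (f k).2) (fun k => (g k).2) with hNp
  refine ⟨Np, ⟨_, Mm, Bm, fun x => ?_, ?_, fun x i => ?_,
      fun x => ?_, fun i f g => rfl⟩, fun i φ hφ => ?_⟩
  · exact (hE'p _).transpose.submatrix _
  · ext c c'
    have := congrFun (congrFun hE's (eC c')) (eC c)
    rw [Matrix.sum_apply] at this ⊢
    simp only [hMm, Matrix.submatrix_apply, Matrix.transpose_apply]
    rw [Equiv.sum_comp eX.symm (fun o => E' o (eC c') (eC c)), this, Matrix.one_apply,
      Matrix.one_apply]
    simp [eq_comm]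
  · exact (hF'p _ _).submatrix _
  · ext b b'
    have := congrFun (congrFun (hF's (eX.symm x)) (eB b)) (eB b')
    rw [Matrix.sum_apply] at this ⊢
    simp only [hBm, Matrix.submatrix_apply]
    rw [Equiv.sum_comp e (fun i => F' (eX.symm x) i (eB b) (eB b')), this, Matrix.one_apply,
      Matrix.one_apply]
    simp
  · have key : Matrix.trace (pureState φ * Np i) =
        ∑ o, (F' o (e i) * (Y (e i) * E' o * (Y (e i))ᴴ)).trace := by
      have r : ∀ o, (F' o (e i) * (Y (e i) * E' o * (Y (e i))ᴴ)).trace =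
          ∑ b, ∑ c, ∑ b', ∑ c', φ (zipw b c) * star (φ (zipw b' c')) *
            (F' o (e i) (eB b') (eB b) * E' o (eC c) (eC c')) := by
        intro o
        simp only [hφ]
        rw [Equiv.sum_comp eB (fun b => ∑ c, ∑ b', ∑ c', Y (e i) b (eC c) *
          star (Y (e i) (eB b') (eC c')) * (F' o (e i) (eB b') b * E' o (eC c) (eC c')))]
        have s1 : ∀ b, ∑ c, ∑ b', ∑ c', Y (e i) b (eC c) *
          star (Y (e i) (eB b') (eC c')) * (F' o (e i) (eB b') b * E' o (eC c) (eC c')) =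
          ∑ c, ∑ b', ∑ c', Y (e i) b c *
          star (Y (e i) b' c') * (F' o (e i) b' b * E' o c c') := by
          intro b
          rw [Equiv.sum_comp eC (fun c => ∑ b', ∑ c', Y (e i) b c *
            star (Y (e i) (eB b') (eC c')) * (F' o (e i) (eB b') b * E' o c (eC c')))]
          refine Finset.sum_congr rfl fun c _ => ?_
          rw [Equiv.sum_comp eB (fun b' => ∑ c', Y (e i) b c *
            star (Y (e i) b' (eC c')) * (F' o (e i) b' b * E' o c (eC c')))]
          refine Finset.sum_congr rfl fun b' _ => ?_
          rw [Equiv.sum_comp eC (fun c' => Y (e i) b c *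
            star (Y (e i) b' c') * (F' o (e i) b' b * E' o c c'))]
        simp only [s1]
        simp only [Matrix.trace, Matrix.diag, Matrix.mul_apply, Matrix.conjTranspose_apply,
          Finset.mul_sum, Finset.sum_mul]
        rw [Finset.sum_comm]
        refine Finset.sum_congr rfl fun b _ => ?_
        conv_rhs => rw [Finset.sum_comm]
        refine Finset.sum_congr rfl fun b' _ => ?_
        rw [Finset.sum_comm]
        refine Finset.sum_congr rfl fun c _ => Finset.sum_congr rfl fun c' _ => ?_
        ring
      simp only [r]
      have t : Matrix.trace (pureState φ * Np i) = ∑ b, ∑ c, ∑ b', ∑ c',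
          φ (zipw b c) * star (φ (zipw b' c')) * Np i (zipw b' c') (zipw b c) := by
        simp only [Matrix.trace, Matrix.diag_apply, Matrix.mul_apply, sum_zipw]
        rfl
      rw [t]
      symm
      rw [Finset.sum_comm]
      refine Finset.sum_congr rfl fun b _ => ?_
      rw [Finset.sum_comm]
      refine Finset.sum_congr rfl fun c _ => ?_
      rw [Finset.sum_comm]
      refine Finset.sum_congr rfl fun b' _ => ?_
      rw [Finset.sum_comm]
      refine Finset.sum_congr rfl fun c' _ => ?_
      rw [← Finset.mul_sum, ← Equiv.sum_comp eX.symm]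
      rfl
    rw [key, Complex.re_sum, Fintype.sum_option]
    have p0 : 0 ≤ rt (F' none (e i) * (Y (e i) * E' none * (Y (e i))ᴴ)) :=
      rt_mul_nonneg (hF'p _ _) ((hE'p none).mul_mul_conjTranspose_same _)
    have p1 : ∀ x, rt (F x (e i) * (Y (e i) * E x * (Y (e i))ᴴ)) ≤
        rt (F' (some x) (e i) * (Y (e i) * E' (some x) * (Y (e i))ᴴ)) := by
      intro x
      simp only [hF', hE', Option.elim]
      rw [Matrix.add_mul, rt_add]
      have : 0 ≤ rt ((if e i = i0 then 1 - ∑ j, F x j else 0) *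
          (Y (e i) * E x * (Y (e i))ᴴ)) := by
        refine rt_mul_nonneg ?_ ((hE x).mul_mul_conjTranspose_same _)
        split_ifs
        · exact hF1 x
        · exact Matrix.PosSemidef.zero
      linarith
    have p2 := Finset.sum_le_sum fun x (_ : x ∈ Finset.univ) => p1 x
    have p3 : ∀ M : Matrix Bt Bt ℂ, M.trace.re = rt M := fun _ => rfl
    simp only [p3]
    linarith

end locc

/-! ### Tensor powers and i.i.d. ensembles -/

section tensor
variable {α β γ : Type*}

/-- The `n`-fold tensor power of a matrix. -/
def pw (M : Matrix α β ℂ) (n : ℕ) : Matrix (Fin n → α) (Fin n → β) ℂ := fun f g => ∏ k, M (f k) (g k)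

lemma pw_mul [Fintype β] (M : Matrix α β ℂ) (M' : Matrix β γ ℂ) (n : ℕ) :
    pw (M * M') n = pw M n * pw M' n := by
  ext f g
  simp only [pw, Matrix.mul_apply, Fintype.prod_sum, Finset.prod_mul_distrib]

lemma pw_conjTranspose (M : Matrix α β ℂ) (n : ℕ) : (pw M n)ᴴ = pw Mᴴ n := by
  ext f g
  simp [pw, Matrix.conjTranspose_apply]

lemma pw_diagonal [DecidableEq α] (l : α → ℂ) (n : ℕ) :
    pw (Matrix.diagonal l) n = Matrix.diagonal fun f : Fin n → α => ∏ k, l (f k) := by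
  ext f g
  simp only [pw, Matrix.diagonal_apply]
  split_ifs with h
  · subst h; simp
  · obtain ⟨k, hk⟩ := Function.ne_iff.1 h
    exact Finset.prod_eq_zero (Finset.mem_univ k) (by simp [hk])

lemma pw_one [DecidableEq α] (n : ℕ) : pw (1 : Matrix α α ℂ) n = 1 := by
  rw [← Matrix.diagonal_one, pw_diagonal]
  simp

/-- Splitting a word of length `n1 + n2`. -/
def splitw (α : Type*) (n1 n2 : ℕ) : (Fin (n1 + n2) → α) ≃ (Fin n1 → α) × (Fin n2 → α) :=
  (Fin.appendEquiv n1 n2).symm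

lemma pw_split (M : Matrix α β ℂ) (n1 n2 : ℕ) (f : Fin (n1 + n2) → α) (g : Fin (n1 + n2) → β) :
    pw M (n1 + n2) f g = pw M n1 (splitw α n1 n2 f).1 (splitw β n1 n2 g).1 *
      pw M n2 (splitw α n1 n2 f).2 (splitw β n1 n2 g).2 := by
  simp only [pw, Fin.prod_univ_add]
  rfl

lemma sum_split [Fintype α] {R : Type*} [AddCommMonoid R] (n1 n2 : ℕ)
    (F : (Fin n1 → α) → (Fin n2 → α) → R) :
    ∑ f, F (splitw α n1 n2 f).1 (splitw α n1 n2 f).2 = ∑ f, ∑ g, F f g := by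
  rw [← Fintype.sum_prod_type']
  exact Equiv.sum_comp (splitw α n1 n2) (fun p => F p.1 p.2)

lemma mulVec_split [Fintype β] (M : Matrix α β ℂ) (n1 n2 : ℕ) (u : (Fin n1 → β) → ℂ)
    (v : (Fin n2 → β) → ℂ) (f : Fin (n1 + n2) → α) :
    (pw M (n1 + n2) *ᵥ fun g => u (splitw β n1 n2 g).1 * v (splitw β n1 n2 g).2) f =
      (pw M n1 *ᵥ u) (splitw α n1 n2 f).1 * (pw M n2 *ᵥ v) (splitw α n1 n2 f).2 := by
  simp only [Matrix.mulVec, dotProduct, pw_split, Finset.sum_mul_sum]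
  rw [← sum_split]
  refine Finset.sum_congr rfl fun g _ => ?_
  ring

end tensor

section ensembles
variable {n dB dC : ℕ} {A : Type*} [Fintype A] [DecidableEq A]

/-- The weighted columns `√(q a) • K a` of `K`, as matrices with a `B` and a `C` index. -/
def ens (K : Matrix (Fin n → Fin dB × Fin dC) A ℂ) (q : A → ℝ) (a : A) :
    Matrix (Fin n → Fin dB) (Fin n → Fin dC) ℂ :=
  Matrix.of fun b c => (√(q a) : ℂ) * K (zipw b c) a

omit [DecidableEq A] in
lemma phsum_ens (K : Matrix (Fin n → Fin dB × Fin dC) A ℂ) (q : A → ℝ) (g : A → Fin 4)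
    (b : Fin n → Fin dB) (c : Fin n → Fin dC) :
    phsum (ens K q) g b c = (K *ᵥ fun a => ph (g a) * √(q a)) (zipw b c) := by
  simp only [phsum, ens, Matrix.sum_apply, Matrix.smul_apply, Matrix.of_apply, smul_eq_mul,
    Matrix.mulVec, dotProduct]
  exact Finset.sum_congr rfl fun a _ => by ring

lemma normSq_mulVec {F : Type*} [Fintype F] {K : Matrix F A ℂ} (hK : Kᴴ * K = 1) (v : A → ℂ) :
    ∑ f, Complex.normSq ((K *ᵥ v) f) = ∑ a, Complex.normSq (v a) := by
  have h : star (K *ᵥ v) ⬝ᵥ (K *ᵥ v) = star v ⬝ᵥ v := by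
    rw [Matrix.star_mulVec, ← Matrix.dotProduct_mulVec, Matrix.mulVec_mulVec, hK,
      Matrix.one_mulVec]
  have := congrArg Complex.re h
  simpa [dotProduct, Complex.normSq_apply, Complex.mul_re] using this

lemma ph_weight_unit {F : Type*} [Fintype F] {K : Matrix F A ℂ} (hK : Kᴴ * K = 1) {q : A → ℝ}
    (hq : ∀ a, 0 ≤ q a) (hq1 : ∑ a, q a = 1) (g : A → Fin 4) :
    ∑ f, Complex.normSq ((K *ᵥ fun a => ph (g a) * √(q a)) f) = 1 := by
  rw [normSq_mulVec hK, ← hq1]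
  refine Finset.sum_congr rfl fun a _ => ?_
  have h : Complex.normSq (ph (g a)) = 1 := by
    have := ph_mul_star (g a)
    rw [Complex.star_def, Complex.mul_conj] at this
    exact_mod_cast this
  rw [Complex.normSq_mul, h, one_mul, Complex.normSq_ofReal, Real.mul_self_sqrt (hq a)]

lemma rt_mul_conjTranspose {m k : Type*} [Fintype m] [Fintype k] (X : Matrix m k ℂ) :
    rt (X * Xᴴ) = ∑ b, ∑ c, Complex.normSq (X b c) := by
  simp [rt, Matrix.trace, Matrix.mul_apply, Complex.normSq_apply]

lemma ens_unit {K : Matrix (Fin n → Fin dB × Fin dC) A ℂ} (hK : Kᴴ * K = 1) {q : A → ℝ}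
    (hq : ∀ a, 0 ≤ q a) (hq1 : ∑ a, q a = 1) (g : A → Fin 4) :
    rt (phsum (ens K q) g * (phsum (ens K q) g)ᴴ) = 1 := by
  rw [rt_mul_conjTranspose, ← ph_weight_unit hK hq hq1 g, sum_zipw]
  simp only [phsum_ens]

omit [Fintype A] in
/-- As `K` is an isometry, the source weights are the spectrum of the Gram matrix. -/
lemma gram_ens {K : Matrix (Fin n → Fin dB × Fin dC) A ℂ} (hK : Kᴴ * K = 1) {q : A → ℝ}
    (hq : ∀ a, 0 ≤ q a) : gram (ens K q) = Matrix.diagonal fun a => (q a : ℂ) := by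
  ext a a'
  have h : (gram (ens K q)) a a' = (√(q a) : ℂ) * √(q a') * (Kᴴ * K) a a' := by
    simp only [gram, ens, Matrix.of_apply, Matrix.trace, Matrix.diag_apply, Matrix.mul_apply,
      Matrix.conjTranspose_apply, sum_zipw, Finset.mul_sum]
    rw [Finset.sum_comm]
    refine Finset.sum_congr rfl fun b _ => Finset.sum_congr rfl fun c _ => ?_
    simp
    ring
  rw [h, hK, Matrix.one_apply, Matrix.diagonal_apply]
  split_ifs with e
  · subst e
    rw [mul_one, ← Complex.ofReal_mul, Real.mul_self_sqrt (hq a)]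
  · simp

lemma rt_ens {K : Matrix (Fin n → Fin dB × Fin dC) A ℂ} (hK : Kᴴ * K = 1) {q : A → ℝ}
    (hq : ∀ a, 0 ≤ q a) (hq1 : ∑ a, q a = 1) : rt (∑ a, ens K q a * (ens K q a)ᴴ) = 1 := by
  rw [← rt_gram, gram_ens hK hq, rt, Matrix.trace_diagonal, ← hq1]
  simp

lemma mul_diag_apply {F : Type*} (K : Matrix F A ℂ) {q : A → ℝ} (hq : ∀ a, 0 ≤ q a) (f g : F) :
    (K * Matrix.diagonal (fun a => (q a : ℂ)) * Kᴴ) f g =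
      ∑ a, (√(q a) * K f a) * star (√(q a) * K g a) := by
  rw [Matrix.mul_apply]
  refine Finset.sum_congr rfl fun a _ => ?_
  have : (q a : ℂ) = (√(q a) : ℂ) * √(q a) := by
    rw [← Complex.ofReal_mul, Real.mul_self_sqrt (hq a)]
  rw [Matrix.mul_diagonal, this]
  simp
  ring

/-- If the average of the ensemble is an i.i.d. state, then so is its `B` marginal. -/
lemma ens_margB {K : Matrix (Fin n → Fin dB × Fin dC) A ℂ} {q : A → ℝ} (hq : ∀ a, 0 ≤ q a)
    {M : Matrix (Fin dB × Fin dC) (Fin dB × Fin dC) ℂ}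
    (hM : K * Matrix.diagonal (fun a => (q a : ℂ)) * Kᴴ = pw M n) :
    ∑ a, ens K q a * (ens K q a)ᴴ = pw (ptraceC M) n := by
  ext b b'
  have h1 : pw (ptraceC M) n b b' = ∑ c, pw M n (zipw b c) (zipw b' c) := by
    simp only [pw, ptraceC, Fintype.prod_sum, zipw]
  rw [h1, ← hM]
  simp only [mul_diag_apply K hq, Matrix.sum_apply, Matrix.mul_apply, ens, Matrix.of_apply,
    Matrix.conjTranspose_apply]
  rw [Finset.sum_comm]

/-- The `C` marginal is transposed, since vectors of `B ⊗ C` are treated as matrices. -/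
lemma ens_margC {K : Matrix (Fin n → Fin dB × Fin dC) A ℂ} {q : A → ℝ} (hq : ∀ a, 0 ≤ q a)
    {M : Matrix (Fin dB × Fin dC) (Fin dB × Fin dC) ℂ}
    (hM : K * Matrix.diagonal (fun a => (q a : ℂ)) * Kᴴ = pw M n) :
    ∑ a, (ens K q a)ᴴ * ens K q a = (pw (ptraceB M) n)ᵀ := by
  ext c c'
  have h1 : (pw (ptraceB M) n)ᵀ c c' = ∑ b, pw M n (zipw b c') (zipw b c) := by
    simp only [Matrix.transpose_apply, pw, ptraceB, Fintype.prod_sum, zipw]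
  rw [h1, ← hM]
  simp only [mul_diag_apply K hq, Matrix.sum_apply, Matrix.mul_apply, ens, Matrix.of_apply,
    Matrix.conjTranspose_apply]
  rw [Finset.sum_comm]
  exact Finset.sum_congr rfl fun b _ => Finset.sum_congr rfl fun a _ => mul_comm _ _

omit [DecidableEq A] in
lemma ens_mono (K : Matrix (Fin n → Fin dB × Fin dC) A ℂ) {q q' : A → ℝ} (hq : ∀ a, 0 ≤ q a)
    (hq' : ∀ a, 0 ≤ q' a) {t : ℝ} (h : ∀ a, q' a ≤ t * q a) :
    ((t : ℂ) • (∑ a, ens K q a * (ens K q a)ᴴ) - ∑ a, ens K q' a * (ens K q' a)ᴴ).PosSemidef := by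
  have e : ∀ (r : A → ℝ) (_ : ∀ a, 0 ≤ r a) a, ens K r a * (ens K r a)ᴴ =
      ((r a : ℝ) : ℂ) • (ens K 1 a * (ens K 1 a)ᴴ) := by
    intro r hr a
    have e1 : ens K r a = (√(r a) : ℂ) • ens K 1 a := by
      ext b c; simp [ens]
    rw [e1, Matrix.conjTranspose_smul, Matrix.smul_mul, Matrix.mul_smul, smul_smul]
    congr 1
    rw [Complex.star_def, Complex.conj_ofReal, ← Complex.ofReal_mul, Real.mul_self_sqrt (hr a)]
  simp only [e q hq, e q' hq', Finset.smul_sum, smul_smul]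
  rw [← Finset.sum_sub_distrib]
  refine Matrix.posSemidef_sum _ fun a _ => ?_
  rw [← sub_smul]
  refine (Matrix.posSemidef_self_mul_conjTranspose _).smul ?_
  have := sub_nonneg.2 (h a)
  exact_mod_cast this

end ensembles

/-! ### Typical sequences and subspaces -/

section typicality
variable {d : Type*} [Fintype d]

lemma sum_cons {n : ℕ} {R : Type*} [AddCommMonoid R] (F : (Fin (n + 1) → d) → R) :
    ∑ a, F a = ∑ i, ∑ a : Fin n → d, F (Fin.cons i a) := by
  rw [← Fintype.sum_prod_type' (fun i (a : Fin n → d) => F (Fin.cons i a))]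
  exact (Equiv.sum_comp (Fin.consEquiv fun _ => d) F).symm

lemma sum_prod_pow (l : d → ℝ) (h1 : ∑ i, l i = 1) (n : ℕ) :
    ∑ a : Fin n → d, ∏ k, l (a k) = 1 := by
  rw [← Fintype.prod_sum (fun (_ : Fin n) i => l i)]
  simp [h1]

/-- The variance of a sum of i.i.d. centred random variables. -/
lemma iid_variance (l X : d → ℝ) (h1 : ∑ i, l i = 1) (hX : ∑ i, l i * X i = 0) (n : ℕ) :
    ∑ a : Fin n → d, (∏ k, l (a k)) * ∑ k, X (a k) = 0 ∧
    ∑ a : Fin n → d, (∏ k, l (a k)) * (∑ k, X (a k)) ^ 2 = n * ∑ i, l i * X i ^ 2 := by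
  induction n with
  | zero => simp
  | succ n ih =>
    have hs := sum_prod_pow l h1 n
    constructor
    · rw [sum_cons]
      have : ∀ i (a : Fin n → d), (∏ k, l ((Fin.cons i a : Fin (n + 1) → d) k)) *
          ∑ k, X ((Fin.cons i a : Fin (n + 1) → d) k) =
          (l i * X i) * ∏ k, l (a k) + l i * ((∏ k, l (a k)) * ∑ k, X (a k)) := by
        intro i a
        simp only [Fin.prod_univ_succ, Fin.sum_univ_succ, Fin.cons_zero, Fin.cons_succ]
        ring
      simp only [this, Finset.sum_add_distrib, ← Finset.mul_sum, hs, ih.1, mul_one, mul_zero, hX,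
        add_zero]
    · rw [sum_cons]
      have : ∀ i (a : Fin n → d), (∏ k, l ((Fin.cons i a : Fin (n + 1) → d) k)) *
          (∑ k, X ((Fin.cons i a : Fin (n + 1) → d) k)) ^ 2 =
          (l i * X i ^ 2) * ∏ k, l (a k) + 2 * (l i * X i) * ((∏ k, l (a k)) * ∑ k, X (a k)) +
            l i * ((∏ k, l (a k)) * (∑ k, X (a k)) ^ 2) := by
        intro i a
        simp only [Fin.prod_univ_succ, Fin.sum_univ_succ, Fin.cons_zero, Fin.cons_succ]
        ring
      simp only [this, Finset.sum_add_distrib, ← Finset.mul_sum, hs, ih.1, ih.2, mul_one, mul_zero,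
        ← Finset.sum_mul, h1, add_zero]
      push_cast
      ring

/-- Typical sequences, by Chebyshev's inequality. The additive constant `K` makes the estimates
hold for every length `n`, including small ones. -/
lemma typical_set (l : d → ℝ) (hl : ∀ i, 0 ≤ l i) (h1 : ∑ i, l i = 1) {δ η : ℝ} (hδ : 0 < δ)
    (hη : 0 < η) : ∃ K : ℝ, 0 ≤ K ∧ ∀ n : ℕ, ∃ T : Finset (Fin n → d),
      1 - η ≤ ∑ a ∈ T, ∏ k, l (a k) ∧
      (∀ a ∈ T, ∏ k, l (a k) ≤ (2 : ℝ) ^ (-(n * (shannonEntropy l - δ) - K))) ∧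
      (T.card : ℝ) ≤ (2 : ℝ) ^ (n * (shannonEntropy l + δ) + K) := by
  set H := shannonEntropy l with hH
  set X : d → ℝ := fun i => -Real.logb 2 (l i) - H with hX
  have hX0 : ∑ i, l i * X i = 0 := by
    simp only [hX, mul_sub, Finset.sum_sub_distrib, ← Finset.sum_mul, h1, hH, shannonEntropy,
      mul_neg, Finset.sum_neg_distrib]
    ring
  set V := ∑ i, l i * X i ^ 2 with hV
  have hV0 : 0 ≤ V := Finset.sum_nonneg fun i _ => mul_nonneg (hl i) (sq_nonneg _)
  -- by Chebyshev the atypical part has probability at most `n * V / (n * δ + K) ^ 2`, and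
  -- `(n * δ + K) ^ 2 ≥ 4 * n * δ * K`; hence this `K`, where `1` makes it positive
  set K : ℝ := V / (4 * δ * η) + 1 with hK
  have hK0 : 0 < K := by positivity
  have hKV : V ≤ 4 * δ * η * K := by
    rw [hK, mul_add, mul_div_cancel₀ _ (by positivity)]
    have : 0 < 4 * δ * η := by positivity
    linarith
  refine ⟨K, hK0.le, fun n => ?_⟩
  set P : (Fin n → d) → ℝ := fun a => ∏ k, l (a k) with hP
  set L : (Fin n → d) → ℝ := fun a => ∑ k, X (a k) with hL
  have hP0 : ∀ a, 0 ≤ P a := fun a => Finset.prod_nonneg fun k _ => hl _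
  set T : Finset (Fin n → d) := Finset.univ.filter fun a => 0 < P a ∧ |L a| ≤ n * δ + K with hT
  have hPL : ∀ a, 0 < P a → P a = (2 : ℝ) ^ (-(L a + n * H)) := by
    intro a ha
    have hne : ∀ k ∈ Finset.univ, l (a k) ≠ 0 := fun k hk h =>
      ha.ne' (Finset.prod_eq_zero hk h)
    have : Real.logb 2 (P a) = -(L a + n * H) := by
      rw [hP, Real.logb_prod _ _ hne]
      simp [hL, hX, Finset.sum_sub_distrib]
    rw [← this, Real.rpow_logb (by norm_num) (by norm_num) ha]
  have hnd : 0 ≤ (n : ℝ) * δ := by positivity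
  refine ⟨T, ?_, fun a ha => ?_, ?_⟩
  · have c1 : (∑ a ∈ Tᶜ, P a) * (n * δ + K) ^ 2 ≤ n * V := by
      rw [← (iid_variance l X h1 hX0 n).2, Finset.sum_mul]
      calc ∑ a ∈ Tᶜ, P a * (n * δ + K) ^ 2 ≤ ∑ a ∈ Tᶜ, P a * L a ^ 2 := by
            refine Finset.sum_le_sum fun a ha => ?_
            rcases (hP0 a).eq_or_lt with h | h
            · simp [← h]
            · have : ¬ |L a| ≤ n * δ + K := fun h' => (Finset.mem_compl.1 ha)
                (Finset.mem_filter.2 ⟨Finset.mem_univ _, h, h'⟩)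
              refine mul_le_mul_of_nonneg_left ?_ h.le
              rw [← sq_abs (L a)]
              exact pow_le_pow_left₀ (by positivity) (not_le.1 this).le 2
        _ ≤ ∑ a, P a * L a ^ 2 := Finset.sum_le_sum_of_subset_of_nonneg (Finset.subset_univ _)
            fun a _ _ => mul_nonneg (hP0 a) (sq_nonneg _)
    have c2 : (n : ℝ) * V ≤ η * (n * δ + K) ^ 2 := by
      have := mul_le_mul_of_nonneg_left hKV (Nat.cast_nonneg (α := ℝ) n)
      nlinarith [mul_nonneg hη.le (sq_nonneg (n * δ - K))]
    have c3 : ∑ a ∈ Tᶜ, P a ≤ η := le_of_mul_le_mul_right (c1.trans c2) (by positivity)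
    have c4 := Finset.sum_add_sum_compl T P
    have c5 : ∑ a, P a = 1 := sum_prod_pow l h1 n
    linarith
  · obtain ⟨h, h'⟩ := (Finset.mem_filter.1 ha).2
    change P a ≤ _
    rw [hPL a h]
    refine Real.rpow_le_rpow_of_exponent_le (by norm_num) ?_
    linarith [(abs_le.1 h').1]
  · have c1 : (T.card : ℝ) * (2 : ℝ) ^ (-(n * (H + δ) + K)) ≤ 1 := by
      calc (T.card : ℝ) * (2 : ℝ) ^ (-(n * (H + δ) + K)) =
            ∑ a ∈ T, (2 : ℝ) ^ (-(n * (H + δ) + K)) := by simp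
        _ ≤ ∑ a ∈ T, P a := by
            refine Finset.sum_le_sum fun a ha => ?_
            obtain ⟨h, h'⟩ := (Finset.mem_filter.1 ha).2
            rw [hPL a h]
            refine Real.rpow_le_rpow_of_exponent_le (by norm_num) ?_
            linarith [(abs_le.1 h').2]
        _ ≤ ∑ a, P a := Finset.sum_le_sum_of_subset_of_nonneg (Finset.subset_univ _)
            fun a _ _ => hP0 a
        _ = 1 := sum_prod_pow l h1 n
    rw [Real.rpow_neg (by norm_num)] at c1
    rwa [← div_eq_mul_inv, div_le_one (by positivity)] at c1

variable [DecidableEq d]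

/-- Spectral decomposition of a density matrix. -/
lemma density_spectral {σ : Matrix d d ℂ} (h : IsDensityMatrix σ) :
    ∃ (W : Matrix d d ℂ) (l : d → ℝ), Wᴴ * W = 1 ∧ W * Wᴴ = 1 ∧ (∀ i, 0 ≤ l i) ∧ ∑ i, l i = 1 ∧
      σ = W * Matrix.diagonal (fun i => (l i : ℂ)) * Wᴴ ∧ vnEntropy σ = shannonEntropy l := by
  have hh := h.1.isHermitian
  refine ⟨hh.eigenvectorUnitary, hh.eigenvalues, ?_, ?_, h.1.eigenvalues_nonneg, ?_, ?_, ?_⟩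
  · exact (Matrix.mem_unitaryGroup_iff').1 hh.eigenvectorUnitary.2
  · exact (Matrix.mem_unitaryGroup_iff).1 hh.eigenvectorUnitary.2
  · have := hh.trace_eq_sum_eigenvalues
    rw [h.2] at this
    have := congrArg Complex.re this
    simpa using this.symm
  · have := hh.spectral_theorem
    rw [Unitary.conjStarAlgAut_apply] at this
    exact this
  · simp [vnEntropy, hh, shannonEntropy]

lemma pw_density {σ W : Matrix d d ℂ} {l : d → ℝ}
    (hσ : σ = W * Matrix.diagonal (fun i => (l i : ℂ)) * Wᴴ) (n : ℕ) :
    pw σ n = pw W n * Matrix.diagonal (fun a => ((∏ k, l (a k) : ℝ) : ℂ)) * (pw W n)ᴴ := by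
  rw [hσ, pw_mul, pw_mul, pw_diagonal, pw_conjTranspose]
  simp

omit [Fintype d] in
lemma pw_isometry {e : Type*} [Fintype e] {W : Matrix e d ℂ} (h : Wᴴ * W = 1) (n : ℕ) :
    (pw W n)ᴴ * pw W n = 1 := by
  rw [pw_conjTranspose, ← pw_mul, h, pw_one]

/-- Typical subspaces of a density matrix; `J` is an isometry onto the subspace. -/
lemma typical_subspace {σ : Matrix d d ℂ} (h : IsDensityMatrix σ) {δ η : ℝ} (hδ : 0 < δ)
    (hη : 0 < η) : ∃ K : ℝ, 0 ≤ K ∧ ∀ n : ℕ, ∃ (T : Finset (Fin n → d))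
      (J : Matrix (Fin n → d) T ℂ), IsPr (J * Jᴴ) ∧
      rt ((1 - J * Jᴴ) * pw σ n) ≤ η ∧
      ((((2 : ℝ) ^ (-(n * (vnEntropy σ - δ) - K)) : ℝ) : ℂ) • (1 : Matrix (Fin n → d) (Fin n → d) ℂ)
        - J * Jᴴ * pw σ n * (J * Jᴴ)).PosSemidef ∧
      (T.card : ℝ) ≤ (2 : ℝ) ^ (n * (vnEntropy σ + δ) + K) := by
  obtain ⟨W, l, hW, hW', hl, h1, hσ, hS⟩ := density_spectral h
  obtain ⟨K, hK, hT⟩ := typical_set l hl h1 hδ hη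
  rw [hS]
  refine ⟨K, hK, fun n => ?_⟩
  obtain ⟨T, t1, t2, t3⟩ := hT n
  have hn := pw_isometry hW n
  have hn' : pw W n * (pw W n)ᴴ = 1 := by rw [pw_conjTranspose, ← pw_mul, hW', pw_one]
  set Wn := pw W n with hWn
  set χ : (Fin n → d) → ℂ := fun a => if a ∈ T then 1 else 0 with hχ
  set J : Matrix (Fin n → d) T ℂ := Matrix.of fun f t => Wn f t with hJ
  have hJJ : J * Jᴴ = Wn * Matrix.diagonal χ * Wnᴴ := by
    ext f g
    rw [Matrix.mul_apply, Matrix.mul_apply]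
    simp only [hJ, Matrix.of_apply, Matrix.conjTranspose_apply, Matrix.mul_diagonal, hχ]
    rw [Finset.sum_coe_sort T (fun a => Wn f a * star (Wn g a))]
    simp
  have hmul : ∀ u v : (Fin n → d) → ℂ, (Wn * Matrix.diagonal u * Wnᴴ) *
      (Wn * Matrix.diagonal v * Wnᴴ) = Wn * Matrix.diagonal (fun a => u a * v a) * Wnᴴ := by
    intro u v
    calc _ = Wn * Matrix.diagonal u * (Wnᴴ * Wn) * Matrix.diagonal v * Wnᴴ := by
          simp only [Matrix.mul_assoc]
      _ = _ := by
          rw [hn, Matrix.mul_one, Matrix.mul_assoc Wn, Matrix.diagonal_mul_diagonal]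
  have hone : ∀ c : ℂ, c • (1 : Matrix (Fin n → d) (Fin n → d) ℂ) =
      Wn * Matrix.diagonal (fun _ => c) * Wnᴴ := by
    intro c
    have : Matrix.diagonal (fun _ : Fin n → d => c) = c • 1 := by
      ext i j; simp [Matrix.diagonal_apply, Matrix.one_apply]
    rw [this, Matrix.mul_smul, Matrix.smul_mul, Matrix.mul_one, hn']
  have hsub : ∀ u v : (Fin n → d) → ℂ, (Wn * Matrix.diagonal u * Wnᴴ) -
      (Wn * Matrix.diagonal v * Wnᴴ) = Wn * Matrix.diagonal (fun a => u a - v a) * Wnᴴ := by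
    intro u v
    rw [← Matrix.sub_mul, ← Matrix.mul_sub, Matrix.diagonal_sub]
  refine ⟨T, J, ⟨?_, ?_⟩, ?_, ?_, t3⟩
  · rw [Matrix.conjTranspose_mul, Matrix.conjTranspose_conjTranspose]
  · rw [hJJ, hmul]
    have : (fun a => χ a * χ a) = χ := by
      funext a
      by_cases ha : a ∈ T <;> simp [hχ, ha]
    rw [this]
  · have e1 : (1 : Matrix (Fin n → d) (Fin n → d) ℂ) = Wn * Matrix.diagonal (fun _ => 1) * Wnᴴ := by
      rw [← hone, one_smul]
    rw [pw_density hσ, hJJ, e1, hsub, hmul, rt_comm, ← Matrix.mul_assoc, hn, Matrix.one_mul, rt,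
      Matrix.trace_diagonal, Complex.re_sum]
    have e2 : ∀ a, ((1 - χ a) * ((∏ k, l (a k) : ℝ) : ℂ)).re =
        ∏ k, l (a k) - if a ∈ T then ∏ k, l (a k) else 0 := by
      intro a
      by_cases ha : a ∈ T
      · simp only [hχ, ha, if_true, sub_self, zero_mul, Complex.zero_re]
      · simp only [hχ, ha, if_false, sub_zero, one_mul, Complex.ofReal_re]
    simp only [e2]
    rw [Finset.sum_sub_distrib, sum_prod_pow l h1 n, ← Finset.sum_filter,
      Finset.filter_mem_eq_inter, Finset.univ_inter]
    linarith
  · rw [pw_density hσ, hJJ, hone, hmul, hmul, hsub]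
    refine Matrix.PosSemidef.mul_mul_conjTranspose_same ?_ _
    rw [Matrix.posSemidef_diagonal_iff]
    intro a
    by_cases ha : a ∈ T
    · have := sub_nonneg.2 (t2 a ha)
      simp only [hχ, ha, if_true, one_mul, mul_one]
      exact_mod_cast this
    · simp only [hχ, ha, if_false, zero_mul, mul_zero, sub_zero]
      have : (0 : ℝ) ≤ (2 : ℝ) ^ (-(n * (shannonEntropy l - δ) - K)) := by positivity
      exact_mod_cast this

omit [DecidableEq d] in
lemma shannon_nonneg (l : d → ℝ) (hl : ∀ i, 0 ≤ l i) (h1 : ∑ i, l i = 1) :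
    0 ≤ shannonEntropy l := by
  rw [shannonEntropy, neg_nonneg]
  refine Finset.sum_nonpos fun i _ => mul_nonpos_of_nonneg_of_nonpos (hl i) ?_
  refine Real.logb_nonpos (by norm_num) (hl i) ?_
  rw [← h1]
  exact Finset.single_le_sum (fun j _ => hl j) (Finset.mem_univ i)

lemma vn_nonneg {σ : Matrix d d ℂ} (h : IsDensityMatrix σ) : 0 ≤ vnEntropy σ := by
  obtain ⟨W, l, -, -, hl, h1, -, hS⟩ := density_spectral h
  rw [hS]
  exact shannon_nonneg l hl h1

end typicality

section marginals
variable {dA dB dC : ℕ}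

lemma density_conj {U : Matrix (Fin dB × Fin dC) (Fin dA) ℂ} (hU : Uᴴ * U = 1)
    {ρ : Matrix (Fin dA) (Fin dA) ℂ} (h : IsDensityMatrix ρ) : IsDensityMatrix (U * ρ * Uᴴ) := by
  refine ⟨h.1.mul_mul_conjTranspose_same U, ?_⟩
  rw [Matrix.mul_assoc, Matrix.trace_mul_comm, Matrix.mul_assoc, hU, Matrix.mul_one, h.2]

lemma density_ptraceC {M : Matrix (Fin dB × Fin dC) (Fin dB × Fin dC) ℂ}
    (h : IsDensityMatrix M) : IsDensityMatrix (ptraceC M) := by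
  constructor
  · have : ptraceC M = ∑ c, M.submatrix (fun b => (b, c)) (fun b => (b, c)) := by
      ext b b'; simp [ptraceC, Matrix.sum_apply]
    rw [this]
    exact Matrix.posSemidef_sum _ fun c _ => h.1.submatrix _
  · rw [← h.2]
    simp [Matrix.trace, ptraceC, Fintype.sum_prod_type]

lemma density_ptraceB {M : Matrix (Fin dB × Fin dC) (Fin dB × Fin dC) ℂ}
    (h : IsDensityMatrix M) : IsDensityMatrix (ptraceB M) := by
  constructor
  · have : ptraceB M = ∑ b, M.submatrix (fun c => (b, c)) (fun c => (b, c)) := by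
      ext c c'; simp [ptraceB, Matrix.sum_apply]
    rw [this]
    exact Matrix.posSemidef_sum _ fun b _ => h.1.submatrix _
  · rw [← h.2]
    simp only [Matrix.trace, ptraceB, Fintype.sum_prod_type, Matrix.diag_apply]
    exact Finset.sum_comm

end marginals

/-! ### Coding at finite block lengths -/

open scoped Kronecker

section finite_code
variable {dA dB dC : ℕ}

lemma psd_smul_one_mono {m : Type*} [Fintype m] [DecidableEq m] {M : Matrix m m ℂ} {c c' : ℝ}
    (h : ((c : ℂ) • (1 : Matrix m m ℂ) - M).PosSemidef) (hc : c ≤ c') :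
    ((c' : ℂ) • (1 : Matrix m m ℂ) - M).PosSemidef := by
  have h1 : (((c' - c : ℝ) : ℂ) • (1 : Matrix m m ℂ)).PosSemidef :=
    Matrix.PosSemidef.one.smul (by exact_mod_cast sub_nonneg.2 hc)
  refine (congrArg Matrix.PosSemidef ?_).mp (h.add h1)
  push_cast
  rw [sub_smul]
  abel

/-- The output of `U` on an i.i.d. source, written with the eigenbasis of the source. -/
lemma source_spectral {U : Matrix (Fin dB × Fin dC) (Fin dA) ℂ} (hU : Uᴴ * U = 1)
    {ρ : Matrix (Fin dA) (Fin dA) ℂ} (hρ : IsDensityMatrix ρ) :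
    ∃ (W : Matrix (Fin dA) (Fin dA) ℂ) (l : Fin dA → ℝ), (∀ i, 0 ≤ l i) ∧ ∑ i, l i = 1 ∧
      vnEntropy ρ = shannonEntropy l ∧
      (∀ n, (pw (U * W) n)ᴴ * pw (U * W) n = 1) ∧
      ∀ n, pw (U * W) n * (Matrix.diagonal (fun a => ((∏ k, l (a k) : ℝ) : ℂ)) :
        Matrix (Fin n → Fin dA) (Fin n → Fin dA) ℂ) * (pw (U * W) n)ᴴ =
        pw (U * ρ * Uᴴ) n := by
  obtain ⟨W, l, hW, -, hl, h1, hσ, hS⟩ := density_spectral hρ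
  refine ⟨W, l, hl, h1, hS, fun n => pw_isometry ?_ n, fun n => ?_⟩
  · rw [Matrix.conjTranspose_mul, Matrix.mul_assoc, ← Matrix.mul_assoc Uᴴ, hU, Matrix.one_mul, hW]
  · rw [pw_mul, pw_mul, pw_mul, pw_density hσ, ← pw_conjTranspose, Matrix.conjTranspose_mul]
    simp only [Matrix.mul_assoc]

/-- An i.i.d. distribution conditioned on a typical set: the probabilities at most double. -/
lemma conditioned {d : Type*} [Fintype d] {n : ℕ} {l : d → ℝ} (hl : ∀ i, 0 ≤ l i)
    {T : Finset (Fin n → d)} {t : ℝ} (ht : 0 ≤ t)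
    (h1 : 1 - 1 / 2 ≤ ∑ a ∈ T, ∏ k, l (a k)) (h2 : ∀ a ∈ T, ∏ k, l (a k) ≤ t) :
    ∃ q : (Fin n → d) → ℝ, (∀ a, 0 ≤ q a) ∧ ∑ a, q a = 1 ∧
      (∀ a, q a ≤ 2 * ∏ k, l (a k)) ∧ ∀ a, q a ≤ 2 * t := by
  set p := ∑ a ∈ T, ∏ k, l (a k) with hp
  have hp0 : 0 < p := by linarith
  have h0 : ∀ a : Fin n → d, 0 ≤ ∏ k, l (a k) := fun a => Finset.prod_nonneg fun k _ => hl _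
  have hdiv : ∀ x : ℝ, 0 ≤ x → x / p ≤ 2 * x := by
    intro x hx
    rw [div_le_iff₀ hp0]
    nlinarith
  refine ⟨fun a => if a ∈ T then (∏ k, l (a k)) / p else 0, fun a => ?_, ?_, fun a => ?_,
    fun a => ?_⟩
  · dsimp only
    split_ifs
    · exact div_nonneg (h0 a) hp0.le
    · exact le_rfl
  · rw [← Finset.sum_filter, Finset.filter_mem_eq_inter, Finset.univ_inter, ← Finset.sum_div,
      div_self hp0.ne']
  · dsimp only
    split_ifs
    · exact hdiv _ (h0 a)
    · have := h0 a; positivity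
  · dsimp only
    split_ifs with ha
    · exact (hdiv _ (h0 a)).trans (by linarith [h2 a ha])
    · positivity

lemma IsPr.transpose {m : Type*} [Fintype m] {P : Matrix m m ℂ} (h : IsPr P) : IsPr Pᵀ := by
  constructor
  · ext i j
    exact congrFun (congrFun h.1 j) i
  · rw [← Matrix.transpose_mul, h.2]

/-- The coding theorem for blocks of lengths `n1` and `n2`. The first block carries `N` messages,
and the second one, using the entanglement left over by the first one, `M` messages. -/
lemma finite_code {U : Matrix (Fin dB × Fin dC) (Fin dA) ℂ} (hU : Uᴴ * U = 1)
    {ρ ρ' : Matrix (Fin dA) (Fin dA) ℂ} (hρ : IsDensityMatrix ρ) (hρ' : IsDensityMatrix ρ')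
    {SB SC SA' SB' : ℝ} (hSB : SB = vnEntropy (ptraceC (U * ρ * Uᴴ)))
    (hSC : SC = vnEntropy (ptraceB (U * ρ * Uᴴ))) (hSA' : SA' = vnEntropy ρ')
    (hSB' : SB' = vnEntropy (ptraceC (U * ρ' * Uᴴ)))
    {δ η : ℝ} (hδ : 0 < δ) (hη : 0 < η) (hη4 : 4 * η ≤ 1) :
    ∃ K : ℝ, 0 ≤ K ∧ ∀ (n1 n2 N M : ℕ) (mm : ℝ), 0 < N → 0 < M → 0 < mm →
      (∀ i < N, (i : ℝ) * (2 : ℝ) ^ (n1 * (SB + δ) + K) * (2 : ℝ) ^ (-(n1 * (SC - δ) - K)) ≤ η) →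
      (∀ j < M, (j : ℝ) ≤ mm) →
      mm * (((2 : ℝ) ^ (-(n1 * (SB - δ) - K)) + (2 : ℝ) ^ (-(n1 * (SC - δ) - K))) / η *
        (2 * (2 : ℝ) ^ (-(n2 * (SB' - δ) - K))) + 2 * (2 : ℝ) ^ (-(n2 * (SA' - δ) - K))) ≤ η ^ 2 →
      ∃ (φ : Fin (N * M) → (Fin (n1 + n2) → Fin dB × Fin dC) → ℂ)
        (Np : Fin (N * M) →
          Matrix (Fin (n1 + n2) → Fin dB × Fin dC) (Fin (n1 + n2) → Fin dB × Fin dC) ℂ),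
        (∀ i, IsUnitVec (φ i)) ∧
        (∀ i, ∃ ψ, (tensorPow U (n1 + n2)).mulVec ψ = φ i) ∧
        IsOneWayLOCC Np ∧
        (∀ i, 1 - 6 * η ≤ (Matrix.trace (pureState (φ i) * Np i)).re) := by
  obtain ⟨W, l, hl, hl1, -, hK, hM⟩ := source_spectral hU hρ
  obtain ⟨W', l', hl', hl1', hS', hK', hM'⟩ := source_spectral hU hρ'
  have dens := density_conj hU hρ
  have dens' := density_conj hU hρ'
  obtain ⟨K1, k1, t1⟩ := typical_subspace (density_ptraceC dens) hδ hη
  obtain ⟨K2, k2, t2⟩ := typical_subspace (density_ptraceB dens) hδ hη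
  obtain ⟨K3, k3, t3⟩ := typical_subspace (density_ptraceC dens') hδ (half_pos hη)
  obtain ⟨K4, k4, t4⟩ := typical_set l' hl' hl1' hδ (by norm_num : (0 : ℝ) < 1 / 2)
  rw [← hSB] at t1
  rw [← hSC] at t2
  rw [← hSB'] at t3
  rw [← hS', ← hSA'] at t4
  refine ⟨K1 + K2 + K3 + K4, by positivity, ?_⟩
  intro n1 n2 N M mm hN0 hM0 hmm hN hMm hp
  set K := K1 + K2 + K3 + K4 with hKdef
  have mono : ∀ x y : ℝ, x ≤ y → (2 : ℝ) ^ x ≤ (2 : ℝ) ^ y := fun x y h =>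
    Real.rpow_le_rpow_of_exponent_le (by norm_num) h
  obtain ⟨T1, J, hP, hPη, hPl, hT1⟩ := t1 n1
  obtain ⟨T2, J2, hQ, hQη, hQl, -⟩ := t2 n1
  obtain ⟨T3, J3, hP', hPη', hPl', -⟩ := t3 n2
  obtain ⟨T, hT, hTl, -⟩ := t4 n2
  set lB := (2 : ℝ) ^ (-(n1 * (SB - δ) - K)) with hlB
  set lC := (2 : ℝ) ^ (-(n1 * (SC - δ) - K)) with hlC
  set lB' := (2 : ℝ) ^ (-(n2 * (SB' - δ) - K)) with hlB'
  set lA' := (2 : ℝ) ^ (-(n2 * (SA' - δ) - K)) with hlA'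
  obtain ⟨q', hq', hq1', hq2', hqT⟩ := conditioned hl' (t := lA') (by positivity) hT
    fun a ha => (hTl a ha).trans (mono _ _ (by linarith))
  set q : (Fin n1 → Fin dA) → ℝ := fun a => ∏ k, l (a k) with hq
  have hq0 : ∀ a, 0 ≤ q a := fun a => Finset.prod_nonneg fun k _ => hl _
  have hq1 : ∑ a, q a = 1 := sum_prod_pow l hl1 n1
  set V := ens (pw (U * W) n1) q with hV
  set V' := ens (pw (U * W') n2) q' with hV'
  have mB : ∑ a, V a * (V a)ᴴ = pw (ptraceC (U * ρ * Uᴴ)) n1 := ens_margB hq0 (hM n1)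
  have mC : ∑ a, (V a)ᴴ * V a = (pw (ptraceB (U * ρ * Uᴴ)) n1)ᵀ := ens_margC hq0 (hM n1)
  have hr0 : ∀ a : Fin n2 → Fin dA, 0 ≤ ∏ k, l' (a k) := fun a =>
    Finset.prod_nonneg fun k _ => hl' _
  have mB' := ens_mono (pw (U * W') n2) hr0 hq' hq2'
  rw [ens_margB hr0 (hM' n2)] at mB'
  change (((2 : ℝ) : ℂ) • pw (ptraceC (U * ρ' * Uᴴ)) n2 -
    ∑ a, V' a * (V' a)ᴴ).PosSemidef at mB'
  obtain ⟨g, h, E, F, e1, e2, f1, f2, hsucc⟩ := stage3 V (ens_unit (hK n1) hq0 hq1) J rfl hP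
    (Q := (J2 * J2ᴴ)ᵀ) hQ.transpose V' hP' lB lC (2 * lB') (2 * lA') η η mm
    (by positivity) (by positivity) (by positivity) (by positivity) hmm hη (by linarith)
    (rt_ens (hK n1) hq0 hq1) (by rw [mB]; exact hPη)
    (by
      rw [mC, rt_comm, ← Matrix.transpose_one, ← Matrix.transpose_sub, ← Matrix.transpose_mul, rt,
        Matrix.trace_transpose]
      exact hQη)
    (by
      rw [mB]
      exact psd_smul_one_mono hPl (mono _ _ (by linarith)))
    (by
      have := (psd_smul_one_mono (c' := lC) hQl (mono _ _ (by linarith))).transpose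
      rw [mC]
      simpa [Matrix.transpose_mul, Matrix.mul_assoc] using this)
    (rt_ens (hK' n2) hq' hq1')
    (by
      have a1 := rt_mul_nonneg hP'.compl.posSemidef mB'
      rw [Matrix.mul_sub, rt_sub, Matrix.mul_smul, rt_smul] at a1
      linarith)
    (by
      have a1 := (psd_smul_one_mono (c' := lB') hPl' (mono _ _ (by linarith))).smul
        (show (0 : ℂ) ≤ ((2 : ℝ) : ℂ) by norm_num)
      have a2 := mB'.mul_mul_conjTranspose_same (J3 * J3ᴴ)
      rw [hP'.1] at a2
      refine (congrArg Matrix.PosSemidef ?_).mp (a1.add a2)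
      rw [smul_sub, smul_smul, Matrix.mul_sub, Matrix.sub_mul, Matrix.mul_smul, Matrix.smul_mul,
        sub_add_sub_cancel, ← Complex.ofReal_mul])
    (by
      have : (((2 * lA' : ℝ) : ℂ) • (1 : Matrix (Fin n2 → Fin dA) (Fin n2 → Fin dA) ℂ)) =
          Matrix.diagonal fun _ => ((2 * lA' : ℝ) : ℂ) := by
        ext i j; simp [Matrix.diagonal_apply, Matrix.one_apply]
      rw [hV', gram_ens (hK' n2) hq', this, Matrix.diagonal_sub, Matrix.posSemidef_diagonal_iff]
      intro a
      have := sub_nonneg.2 (hqT a)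
      exact_mod_cast this)
    N (fun i hi => by
      refine le_trans ?_ (hN i hi)
      refine mul_le_mul_of_nonneg_right (mul_le_mul_of_nonneg_left ?_ (Nat.cast_nonneg i))
        (by positivity)
      rw [Fintype.card_coe]
      exact hT1.trans (mono _ _ (by linarith)))
    M hMm hp
  have : Nonempty (Fin N × Fin M) := ⟨(⟨0, hN0⟩, ⟨0, hM0⟩)⟩
  set e : Fin (N * M) ≃ Fin N × Fin M := finProdFinEquiv.symm with he
  obtain ⟨Np, hNp, hsuc⟩ := locc_assemble (splitw (Fin dB) n1 n2) (splitw (Fin dC) n1 n2)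
    (fun y => phsum V (g y.1) ⊗ₖ phsum V' (h y)) E F e1 e2 f1 f2 e
  set w1 : Fin (N * M) → (Fin n1 → Fin dA) → ℂ := fun i a => ph (g (e i).1 a) * √(q a) with hw1
  set w2 : Fin (N * M) → (Fin n2 → Fin dA) → ℂ := fun i a => ph (h (e i) a) * √(q' a) with hw2
  set P := fun i => pw (U * W) n1 *ᵥ w1 i with hPdef
  set P' := fun i => pw (U * W') n2 *ᵥ w2 i with hPdef'
  refine ⟨fun i f => P i (splitw _ n1 n2 f).1 * P' i (splitw _ n1 n2 f).2, Np, fun i => ?_,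
    fun i => ?_, hNp, fun i => ?_⟩
  · rw [IsUnitVec]
    simp only [Complex.normSq_mul]
    rw [sum_split n1 n2 (fun f f' => Complex.normSq (P i f) * Complex.normSq (P' i f')),
      ← Finset.sum_mul_sum, ph_weight_unit (hK n1) hq0 hq1, ph_weight_unit (hK' n2) hq' hq1',
      one_mul]
  · refine ⟨fun f => (pw W n1 *ᵥ w1 i) (splitw _ n1 n2 f).1 *
      (pw W' n2 *ᵥ w2 i) (splitw _ n1 n2 f).2, ?_⟩
    funext f
    refine (mulVec_split U n1 n2 _ _ f).trans ?_
    rw [Matrix.mulVec_mulVec, Matrix.mulVec_mulVec, ← pw_mul, ← pw_mul]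
  · refine le_trans ?_ (hsuc i _ fun b c => ?_)
    · have := hsucc (e i)
      linarith
    · rw [Matrix.kroneckerMap_apply, hV, hV', phsum_ens, phsum_ens]
      rfl

end finite_code

/-! ### Rates -/

section rates

/-- The number of messages carried by both blocks, when the number of messages of the second block
is as large as the error bound allows. The hypothesis `h` says that the entanglement entropy of
the first block covers what the second block consumes. -/
lemma message_count {SB SC SA' SB' δ η K p b1 : ℝ} {n1 n2 : ℕ} (hδ : 0 < δ) (hη : 0 < η)
    (hK : 0 ≤ K) (h1 : SB < SC) (h : n2 * (SA' - SB') ≤ n1 * SB)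
    (hp : p = ((2 : ℝ) ^ (-(n1 * (SB - δ) - K)) + (2 : ℝ) ^ (-(n1 * (SC - δ) - K))) / η *
        (2 * (2 : ℝ) ^ (-(n2 * (SB' - δ) - K))) + 2 * (2 : ℝ) ^ (-(n2 * (SA' - δ) - K)))
    (hb1 : b1 = η * (2 : ℝ) ^ (n1 * (SC - SB) - 2 * n1 * δ - 2 * K)) :
    η ^ 3 / (4 / η + 2) *
      (2 : ℝ) ^ (n1 * (SC - SB) + n2 * SA' - 3 * ((n1 : ℝ) + n2) * δ - 4 * K) ≤
        b1 * (η ^ 2 / p) := by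
  have mono : ∀ x y : ℝ, x ≤ y → (2 : ℝ) ^ x ≤ (2 : ℝ) ^ y := fun x y h =>
    Real.rpow_le_rpow_of_exponent_le (by norm_num) h
  have n10 : (0 : ℝ) ≤ n1 := Nat.cast_nonneg _
  have n20 : (0 : ℝ) ≤ n2 := Nat.cast_nonneg _
  have n1δ : 0 ≤ n1 * δ := by positivity
  have n2δ : 0 ≤ n2 * δ := by positivity
  set r := (2 : ℝ) ^ (-(n2 * SA') + ((n1 : ℝ) + n2) * δ + 2 * K) with hr
  have c1 : (2 : ℝ) ^ (-(n1 * (SC - δ) - K)) ≤ (2 : ℝ) ^ (-(n1 * (SB - δ) - K)) := by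
    refine mono _ _ ?_
    have := mul_le_mul_of_nonneg_left h1.le n10
    linarith
  have c2 : (2 : ℝ) ^ (-(n1 * (SB - δ) - K)) * (2 : ℝ) ^ (-(n2 * (SB' - δ) - K)) ≤ r := by
    rw [← Real.rpow_add (by norm_num)]
    exact mono _ _ (by linarith)
  have c3 : (2 : ℝ) ^ (-(n2 * (SA' - δ) - K)) ≤ r := mono _ _ (by linarith)
  have hp0 : 0 < p := by rw [hp]; positivity
  have hpr : p ≤ (4 / η + 2) * r := by
    calc p ≤ ((2 : ℝ) ^ (-(n1 * (SB - δ) - K)) + (2 : ℝ) ^ (-(n1 * (SB - δ) - K))) / η *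
        (2 * (2 : ℝ) ^ (-(n2 * (SB' - δ) - K))) + 2 * (2 : ℝ) ^ (-(n2 * (SA' - δ) - K)) := by
          rw [hp]; gcongr
      _ = 4 / η * ((2 : ℝ) ^ (-(n1 * (SB - δ) - K)) * (2 : ℝ) ^ (-(n2 * (SB' - δ) - K))) +
          2 * (2 : ℝ) ^ (-(n2 * (SA' - δ) - K)) := by ring
      _ ≤ 4 / η * r + 2 * r := by gcongr
      _ = _ := by ring
  have hr0 : 0 < r := by positivity
  have e : (2 : ℝ) ^ (n1 * (SC - SB) + n2 * SA' - 3 * ((n1 : ℝ) + n2) * δ - 4 * K) ≤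
      (2 : ℝ) ^ (n1 * (SC - SB) - 2 * n1 * δ - 2 * K) / r := by
    rw [hr, ← Real.rpow_sub (by norm_num)]
    exact mono _ _ (by linarith)
  calc _ ≤ η ^ 3 / (4 / η + 2) * ((2 : ℝ) ^ (n1 * (SC - SB) - 2 * n1 * δ - 2 * K) / r) := by
        gcongr
    _ = b1 * (η ^ 2 / ((4 / η + 2) * r)) := by
        rw [hb1]; field_simp
    _ ≤ b1 * (η ^ 2 / p) := by
        have : 0 < b1 := by rw [hb1]; positivity
        gcongr

/-- Time sharing: the block lengths `n1`, `n2`, in a ratio close to `1 : k`. -/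
lemma block_lengths {SA' SB D G : ℝ} (hSA : 0 ≤ SA') (hSB : 0 ≤ SB) (hD : 0 < D) (hG : 0 ≤ G)
    (n : ℕ) : ∃ n1 n2 : ℕ, n = n1 + n2 ∧ n2 * D ≤ n1 * SB ∧
      n * ((G + SB / D * SA') / (1 + SB / D)) - SA' ≤ n1 * G + n2 * SA' := by
  set x : ℝ := n * SB / (D + SB) with hx
  have hx0 : 0 ≤ x := by positivity
  have hDS : 0 < D + SB := by positivity
  have hxe : x * (D + SB) = n * SB := by rw [hx]; field_simp
  have hxn : x ≤ n := by
    rw [hx, div_le_iff₀ hDS]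
    exact mul_le_mul_of_nonneg_left (by linarith) (Nat.cast_nonneg n)
  have f1 := Nat.floor_le hx0
  have f2 := (Nat.lt_floor_add_one x).le
  have f3 : ⌊x⌋₊ ≤ n := Nat.floor_le_of_le hxn
  refine ⟨n - ⌊x⌋₊, ⌊x⌋₊, by omega, ?_, ?_⟩
  · rw [Nat.cast_sub f3]
    have := mul_le_mul_of_nonneg_right f1 hDS.le
    linarith
  · rw [Nat.cast_sub f3]
    have e : n * ((G + SB / D * SA') / (1 + SB / D)) = (n - x) * G + x * SA' := by
      rw [hx]; field_simp; ring
    rw [e]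
    have g1 := mul_le_mul_of_nonneg_right f1 hG
    have g2 := mul_le_mul_of_nonneg_right f2 hSA
    linarith

end rates

/-- if S(B) < S(C) and S(B') < S(A'), then the rate
(S(C) − S(B) + (S(B)/(S(A')−S(B')))·S(A')) / (1 + S(B)/(S(A')−S(B'))) is achievable
with one-way LOCC (C→B) decoding. -/
theorem stmt2 (dA dB dC : ℕ) (hA : 0 < dA) (hB : 0 < dB) (hC : 0 < dC)
    (U : Matrix (Fin dB × Fin dC) (Fin dA) ℂ) (hU : Uᴴ * U = 1)
    (ρ ρ' : Matrix (Fin dA) (Fin dA) ℂ) (hρ : IsDensityMatrix ρ) (hρ' : IsDensityMatrix ρ')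
    (SA SB SC SA' SB' : ℝ)
    (hSA : SA = vnEntropy ρ)
    (hSB : SB = vnEntropy (ptraceC (U * ρ * Uᴴ)))
    (hSC : SC = vnEntropy (ptraceB (U * ρ * Uᴴ)))
    (hSA' : SA' = vnEntropy ρ')
    (hSB' : SB' = vnEntropy (ptraceC (U * ρ' * Uᴴ)))
    (h1 : SB < SC) (h2 : SB' < SA') :
    AchievableOneWayCB U
      ((SC - SB + (SB / (SA' - SB')) * SA') / (1 + SB / (SA' - SB'))) := by
  intro ε0 hε0
  set ε := min ε0 1 with hε_def
  have hε : 0 < ε := lt_min hε0 one_pos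
  have hε1 : ε ≤ 1 := min_le_right _ _
  have hεε0 : ε ≤ ε0 := min_le_left _ _
  have hSA0 : 0 ≤ SA' := hSA' ▸ vn_nonneg hρ'
  have hSB0 : 0 ≤ SB := hSB ▸ vn_nonneg (density_ptraceC (density_conj hU hρ))
  set R := (SC - SB + (SB / (SA' - SB')) * SA') / (1 + SB / (SA' - SB')) with hR
  set η := ε / 6 with hη
  have hη0 : 0 < η := by positivity
  obtain ⟨K, hK, hcode⟩ := finite_code hU hρ hρ' hSB hSC hSA' hSB' hη0 hη0 (by linarith)
  set c := η ^ 3 / (4 / η + 2) with hc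
  have hc0 : 0 < c := by positivity
  refine ⟨⌈2 * (SA' + 4 * K - Real.logb 2 c) / ε⌉₊, fun n hn => ?_⟩
  have hn' : SA' + 4 * K - Real.logb 2 c ≤ n * (ε / 2) := by
    have := (Nat.ceil_le.1 hn)
    rw [div_le_iff₀ hε] at this
    linarith
  obtain ⟨n1, n2, rfl, hlen, hrate⟩ := block_lengths hSA0 hSB0 (sub_pos.2 h2) (sub_pos.2 h1).le n
  rw [← hR] at hrate
  push_cast at hn' hrate
  set p := ((2 : ℝ) ^ (-(n1 * (SB - η) - K)) + (2 : ℝ) ^ (-(n1 * (SC - η) - K))) / η *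
    (2 * (2 : ℝ) ^ (-(n2 * (SB' - η) - K))) + 2 * (2 : ℝ) ^ (-(n2 * (SA' - η) - K)) with hp
  set b1 := η * (2 : ℝ) ^ (n1 * (SC - SB) - 2 * n1 * η - 2 * K) with hb1
  have hp0 : 0 < p := by positivity
  have hb0 : 0 < b1 := by positivity
  have hmm : 0 < η ^ 2 / p := by positivity
  obtain ⟨φ, Np, u1, u2, u3, u4⟩ := hcode n1 n2 ⌈b1⌉₊ ⌈η ^ 2 / p⌉₊ (η ^ 2 / p)
    (Nat.ceil_pos.2 hb0) (Nat.ceil_pos.2 hmm) hmm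
    (fun i hi => by
      have hi' := (Nat.lt_ceil.1 hi).le
      calc _ ≤ b1 * (2 : ℝ) ^ (n1 * (SB + η) + K) * (2 : ℝ) ^ (-(n1 * (SC - η) - K)) := by gcongr
        _ = η * (2 : ℝ) ^ (0 : ℝ) := by
          rw [hb1, mul_assoc, mul_assoc, ← Real.rpow_add (by norm_num),
            ← Real.rpow_add (by norm_num)]
          congr 2
          ring
        _ ≤ η := by simp)
    (fun j hj => (Nat.lt_ceil.1 hj).le) (div_mul_cancel₀ _ hp0.ne').le
  refine ⟨⌈b1⌉₊ * ⌈η ^ 2 / p⌉₊, φ, Np, ?_, u1, u2, u3, fun i => le_trans ?_ (u4 i)⟩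
  · have hcount := message_count hη0 hη0 hK h1 hlen hp hb1
    rw [← hc] at hcount
    have hc2 : c = (2 : ℝ) ^ Real.logb 2 c :=
      (Real.rpow_logb (by norm_num) (by norm_num) hc0).symm
    calc (2 : ℝ) ^ (((n1 + n2 : ℕ) : ℝ) * (R - ε0)) ≤ (2 : ℝ) ^ (Real.logb 2 c +
          (n1 * (SC - SB) + n2 * SA' - 3 * ((n1 : ℝ) + n2) * η - 4 * K)) := by
          refine Real.rpow_le_rpow_of_exponent_le (by norm_num) ?_
          push_cast
          have := mul_le_mul_of_nonneg_left hεε0 (show (0 : ℝ) ≤ (n1 : ℝ) + n2 by positivity)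
          rw [hη]
          linarith
      _ = c * (2 : ℝ) ^ (n1 * (SC - SB) + n2 * SA' - 3 * ((n1 : ℝ) + n2) * η - 4 * K) := by
          rw [Real.rpow_add (by norm_num), ← hc2]
      _ ≤ b1 * (η ^ 2 / p) := hcount
      _ ≤ _ := by
          push_cast
          exact mul_le_mul (Nat.le_ceil _) (Nat.le_ceil _) hmm.le (Nat.cast_nonneg _)
  · linarith
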